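/- (Elliptic analogue of Bailey's transformation formula for terminating ₁₀ω₉ series.) Let n be a nonnegative integer and let a, b, c, d, e, f, g be nonzero complex numbers with b·c·d·e·f·g = a³q^{2(n+2)}, and set λ = a²q²/(bcd). Assume that none of the theta factors appearing in the denominators of either side vanish. Then ₁₀ω₉[a; b, c, d, e, f, g, q^{−2n}] = [(aq², aq²/(ef), λq²/e, λq²/f)_n / (aq²/e, aq²/f, λq²/(ef), λq²)_n] · ₁₀ω₉[λ; λb/a, λc/a, λd/a, e, f, g, q^{−2n}]. -/

import Mathlib

noncomputable section

open Finset

/-- The normalized Jacobi theta function `θ(z) = ∏_{j≥0} (1 - z p^j)(1 - p^{j+1}/z)`. -/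
def theta (p : ℝ) (z : ℂ) : ℂ :=
  ∏' j : ℕ, ((1 - z * (p : ℂ) ^ j) * (1 - (p : ℂ) ^ (j + 1) / z))

/-- Complex power `q ^ l := exp (l · log q)` for a real base `q`. -/
def qp (q : ℝ) (l : ℂ) : ℂ := Complex.exp (l * (Real.log q : ℂ))

/-- Elliptic Pochhammer symbol `(a)_n = ∏_{i=0}^{n-1} θ(a q^{2i})` in base `q², p`. -/
def epoch (p q : ℝ) (a : ℂ) (n : ℕ) : ℂ :=
  ∏ i ∈ Finset.range n, theta p (a * qp q (2 * (i : ℂ)))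

/-- Elliptic binomial coefficient `[k over l] = ∏_{i=1}^{l} θ(q^{2(k-l+i)})/θ(q^{2i})`. -/
def ellbin (p q : ℝ) (k l : ℕ) : ℂ :=
  ∏ i ∈ Finset.range l,
    theta p (qp q (2 * ((k : ℂ) - (l : ℂ) + (i : ℂ) + 1))) / theta p (qp q (2 * ((i : ℂ) + 1)))

/-- Entry `a(λ,z)` of the Andrews–Baxter–Forrester `R`-matrix. -/
def Ra (p q : ℝ) (lam z : ℂ) : ℂ :=
  theta p z * theta p (qp q (2 * (lam + 2))) /
    (theta p (qp q 2 * z) * theta p (qp q (2 * (lam + 1))))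

/-- Entry `b(λ,z)` of the Andrews–Baxter–Forrester `R`-matrix. -/
def Rb (p q : ℝ) (lam z : ℂ) : ℂ :=
  theta p (qp q 2) * theta p (qp q (-2 * (lam + 1)) * z) /
    (theta p (qp q 2 * z) * theta p (qp q (-2 * (lam + 1))))

/-- Entry `c(λ,z)` of the Andrews–Baxter–Forrester `R`-matrix. -/
def Rc (p q : ℝ) (lam z : ℂ) : ℂ :=
  theta p (qp q 2) * theta p (qp q (2 * (lam + 1)) * z) /
    (theta p (qp q 2 * z) * theta p (qp q (2 * (lam + 1))))

/-- Entry `d(λ,z)` of the Andrews–Baxter–Forrester `R`-matrix. -/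
def Rd (p q : ℝ) (lam z : ℂ) : ℂ :=
  theta p z * theta p (qp q (-2 * lam)) /
    (theta p (qp q 2 * z) * theta p (qp q (-2 * (lam + 1))))

/-- Coefficient `A_k(λ,z)` of the Felder–Varchenko dynamical representation `π^ω`. -/
def Ak (p q : ℝ) (om : ℂ) (k : ℕ) (lam z : ℂ) : ℂ :=
  qp q (2 * (k : ℂ)) * theta p (qp q (-2 * (lam + 1) - 2 * (k : ℂ))) *
      theta p (z * qp q (om - 2 * (k : ℂ) + 1)) /
    (theta p (qp q (-2 * (lam + 1))) * theta p (z * qp q (om + 1)))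

/-- Coefficient `B_k(λ,z)` of the Felder–Varchenko dynamical representation `π^ω`. -/
def Bk (p q : ℝ) (om : ℂ) (k : ℕ) (lam z : ℂ) : ℂ :=
  qp q (k : ℂ) * theta p (qp q 2) *
      theta p (z * qp q (-2 * (lam + 1) + om - 2 * (k : ℂ) - 1)) /
    (theta p (qp q (-2 * (lam + 1))) * theta p (z * qp q (om + 1)))

/-- Coefficient `C_k(λ,z)` of the Felder–Varchenko dynamical representation `π^ω`;
`C_0 = 0`. -/
def Ck (p q : ℝ) (om : ℂ) (k : ℕ) (lam z : ℂ) : ℂ :=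
  if k = 0 then 0
  else
    qp q (-((k : ℂ) - 1)) * theta p (qp q (2 * (k : ℂ))) *
        theta p (qp q (2 * (om - (k : ℂ) + 1))) *
        theta p (z * qp q (2 * (lam + 1) - om + 2 * (k : ℂ) - 1)) /
      (theta p (qp q 2) * theta p (qp q (2 * (lam + 1))) * theta p (z * qp q (om + 1)))

/-- Coefficient `D_k(λ,z)` of the Felder–Varchenko dynamical representation `π^ω`. -/
def Dk (p q : ℝ) (om : ℂ) (k : ℕ) (lam z : ℂ) : ℂ :=
  theta p (qp q (-2 * (lam + 1 - om + (k : ℂ)))) * theta p (z * qp q (-om + 2 * (k : ℂ) + 1)) /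
    (theta p (qp q (-2 * (lam + 1))) * theta p (z * qp q (om + 1)))

/-- `F(μ) = q^μ θ(q^{-2(μ+1)})`. -/
def Fdet (p q : ℝ) (mu : ℂ) : ℂ := qp q mu * theta p (qp q (-2 * (mu + 1)))

/-- The coefficient `C_{kl}(μ)` from the corepresentation matrix elements. -/
def Ckl (p q : ℝ) (k l : ℕ) (mu : ℂ) : ℂ :=
  ellbin p q k l * epoch p q (qp q (2 * (mu - (l : ℂ) + 2))) l /
    epoch p q (qp q (2 * (mu + (k : ℂ) - 2 * (l : ℂ) + 2))) l

/-- The terminating balanced very-well-poised elliptic hypergeometric series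
`₁₀ω₉(a₁; a₄,…,a₁₀)`, truncated at `n`. -/
def tenW9 (p q : ℝ) (n : ℕ) (a1 a4 a5 a6 a7 a8 a9 a10 : ℂ) : ℂ :=
  ∑ k ∈ Finset.range (n + 1),
    theta p (a1 * qp q (4 * (k : ℂ))) / theta p a1 *
      (epoch p q a1 k * epoch p q a4 k * epoch p q a5 k * epoch p q a6 k * epoch p q a7 k *
        epoch p q a8 k * epoch p q a9 k * epoch p q a10 k * qp q (2 * (k : ℂ))) /
      (epoch p q (qp q 2) k * epoch p q (a1 * qp q 2 / a4) k * epoch p q (a1 * qp q 2 / a5) k *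
        epoch p q (a1 * qp q 2 / a6) k * epoch p q (a1 * qp q 2 / a7) k *
        epoch p q (a1 * qp q 2 / a8) k * epoch p q (a1 * qp q 2 / a9) k *
        epoch p q (a1 * qp q 2 / a10) k)

/-- The product of all theta factors appearing in denominators of the terms of
`tenW9 p q n a1 a4 … a10` (including the `θ(a₁)` from the very-well-poised prefactor). -/
def tenW9Den (p q : ℝ) (n : ℕ) (a1 a4 a5 a6 a7 a8 a9 a10 : ℂ) : ℂ :=
  theta p a1 * epoch p q (qp q 2) n * epoch p q (a1 * qp q 2 / a4) n *
    epoch p q (a1 * qp q 2 / a5) n * epoch p q (a1 * qp q 2 / a6) n *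
    epoch p q (a1 * qp q 2 / a7) n * epoch p q (a1 * qp q 2 / a8) n *
    epoch p q (a1 * qp q 2 / a9) n * epoch p q (a1 * qp q 2 / a10) n

/-- additive Pochhammer product -/
def PP (s : ℂ → ℂ) (h x : ℂ) (n : ℕ) : ℂ := ∏ i ∈ Finset.range n, s (x + i * h)

/-- three-term relation -/
def ThreeTerm (s : ℂ → ℂ) : Prop := ∀ x y u v : ℂ,
  s (x + y) * s (x - y) * s (u + v) * s (u - v) - s (x + v) * s (x - v) * s (u + y) * s (u - y)
    = s (x + u) * s (x - u) * s (y + v) * s (y - v)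

lemma PP_zero (s : ℂ → ℂ) (h x : ℂ) : PP s h x 0 = 1 := by simp [PP]

lemma PP_succ (s : ℂ → ℂ) (h x : ℂ) (n : ℕ) :
    PP s h x (n + 1) = PP s h x n * s (x + n * h) := by
  simp [PP, Finset.prod_range_succ]

lemma PP_add (s : ℂ → ℂ) (h x : ℂ) (m n : ℕ) :
    PP s h x (m + n) = PP s h x m * PP s h (x + m * h) n := by
  unfold PP
  rw [Finset.prod_range_add]
  congr 1
  apply Finset.prod_congr rfl
  intro i _
  congr 1
  push_cast
  ring

lemma PP_succ' (s : ℂ → ℂ) (h x : ℂ) (n : ℕ) :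
    PP s h x (n + 1) = s x * PP s h (x + h) n := by
  rw [add_comm, PP_add]
  simp [PP_succ, PP_zero]

lemma PP_reflect (s : ℂ → ℂ) (hodd : ∀ x, s (-x) = - s x) (h x y : ℂ) (n : ℕ)
    (hxy : x + y = -((n : ℂ) - 1) * h) :
    PP s h x n = (-1) ^ n * PP s h y n := by
  unfold PP
  rw [← Finset.prod_range_reflect]
  rw [← Finset.card_range n, ← Finset.prod_const, Finset.card_range, ← Finset.prod_mul_distrib]
  apply Finset.prod_congr rfl
  intro i hi
  have hi' := Finset.mem_range.1 hi
  have : ((n - 1 - i : ℕ) : ℂ) = (n : ℂ) - 1 - i := by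
    rw [Nat.sub_sub, Nat.cast_sub (by omega)]
    push_cast
    ring
  rw [this]
  have h2 : x + ((n : ℂ) - 1 - i) * h = -(y + i * h) := by linear_combination hxy
  rw [h2, hodd]
  ring

/-- genericity -/
def GG (s : ℂ → ℂ) (h x : ℂ) : Prop := ∀ i : ℤ, s (x + i * h) ≠ 0

lemma GG.ne {s : ℂ → ℂ} {h x : ℂ} (H : GG s h x) (i : ℤ) {y : ℂ} (hy : y = x + i * h) :
    s y ≠ 0 := hy ▸ H i

lemma GG.shift {s : ℂ → ℂ} {h x : ℂ} (H : GG s h x) (i : ℤ) {y : ℂ} (hy : y = x + i * h) :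
    GG s h y := by
  intro j
  have := H (i + j)
  rw [hy]
  convert this using 2
  push_cast
  ring

lemma GG.neg {s : ℂ → ℂ} (hodd : ∀ x, s (-x) = - s x) {h x : ℂ} (H : GG s h x) {y : ℂ}
    (hy : y = - x) : GG s h y := by
  intro j
  have := H (-j)
  rw [hy]
  have e : -x + (j : ℂ) * h = -(x + ((-j : ℤ) : ℂ) * h) := by push_cast; ring
  rw [e, hodd]
  exact neg_ne_zero.2 this

lemma GG.PP {s : ℂ → ℂ} {h x : ℂ} (H : GG s h x) (n : ℕ) (i : ℤ) {y : ℂ} (hy : y = x + i * h) :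
    PP s h y n ≠ 0 := by
  unfold _root_.PP
  refine Finset.prod_ne_zero_iff.2 fun j _ => (H.shift i hy).ne j (by push_cast; rfl)

/-- Frenkel-Turaev term -/
noncomputable def FTt (s : ℂ → ℂ) (h : ℂ) (n k : ℕ) (a b c d e : ℂ) : ℂ :=
  s (a + 2 * k * h) / s a *
    (PP s h a k * PP s h b k * PP s h c k * PP s h d k * PP s h e k * PP s h (-n * h) k) /
    (PP s h h k * PP s h (a + h - b) k * PP s h (a + h - c) k * PP s h (a + h - d) k *
      PP s h (a + h - e) k * PP s h (a + h + n * h) k)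

set_option maxHeartbeats 2000000 in
lemma FT_step (s : ℂ → ℂ) (hodd : ∀ x, s (-x) = - s x) (h3 : ThreeTerm s) (h : ℂ) (n k : ℕ)
    (hk : k ≤ n) (hnz : ∀ i : ℕ, 1 ≤ i → i ≤ n + 1 → s (i * h) ≠ 0)
    (a b c d e : ℂ)
    (ga : GG s h a) (gab : GG s h (a - b)) (gac : GG s h (a - c)) (gad : GG s h (a - d))
    (gae : GG s h (a - e)) :
    FTt s h (n + 1) (k + 1) a b c d (e + h) = FTt s h n (k + 1) a b c d e +
      (- s (a + 2 * h) * s (a + h) * s b * s c * s d * s ((n + 1) * h + e) *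
        s ((n + 1) * h + a - e) / (s (a + h - b) * s (a + h - c) * s (a + h - d) *
        s (a + h - e) * s (a - e) * s (a + (n + 1) * h) * s (a + (n + 2) * h))) *
      FTt s h n k (a + 2 * h) (b + h) (c + h) (d + h) (e + h) := by
  have key := h3 ((k + 1) * h + a / 2) (e - a / 2) ((n + 1) * h + a / 2) (a / 2)
  have e1 : ((k : ℂ) + 1) * h + a / 2 + (e - a / 2) = e + (k + 1) * h := by ring
  have e2 : ((k : ℂ) + 1) * h + a / 2 - (e - a / 2) = a - e + (k + 1) * h := by ring
  have e3 : ((n : ℂ) + 1) * h + a / 2 + a / 2 = a + (n + 1) * h := by ring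
  have e4 : ((n : ℂ) + 1) * h + a / 2 - a / 2 = (n + 1) * h := by ring
  have e5 : ((k : ℂ) + 1) * h + a / 2 + a / 2 = a + (k + 1) * h := by ring
  have e6 : ((k : ℂ) + 1) * h + a / 2 - a / 2 = (k + 1) * h := by ring
  have e7 : ((n : ℂ) + 1) * h + a / 2 + (e - a / 2) = (n + 1) * h + e := by ring
  have e8 : ((n : ℂ) + 1) * h + a / 2 - (e - a / 2) = (n + 1) * h + a - e := by ring
  have e9 : ((k : ℂ) + 1) * h + a / 2 + (((n : ℂ) + 1) * h + a / 2) =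
    a + (n + 2 + k) * h := by ring
  have e10 : ((k : ℂ) + 1) * h + a / 2 - (((n : ℂ) + 1) * h + a / 2) = (-n + k) * h := by ring
  have e11 : e - a / 2 + a / 2 = e := by ring
  have e12 : e - a / 2 - a / 2 = -(a - e) := by ring
  rw [e1, e2, e3, e4, e5, e6, e7, e8, e9, e10, e11, e12, hodd] at key
  -- Pochhammer relations
  have pa : PP s h a (k + 1) * s (a + (k + 1) * h) = s a * s (a + h) * PP s h (a + 2 * h) k := by
    have := PP_succ s h a (k + 1)
    rw [PP_succ' s h a (k + 1), PP_succ' s h (a + h) k] at this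
    have e : a + h + h = a + 2 * h := by ring
    rw [e] at this
    push_cast at this
    rw [← this]; ring
  have pae : PP s h (a - e) (k + 1) * s (a - e + (k + 1) * h) =
      s (a - e) * s (a + h - e) * PP s h (a + 2 * h - e) k := by
    have := PP_succ s h (a - e) (k + 1)
    rw [PP_succ' s h (a - e) (k + 1), PP_succ' s h (a - e + h) k] at this
    have e0 : a - e + h + h = a + 2 * h - e := by ring
    have e' : a - e + h = a + h - e := by ring
    rw [e0, e'] at this
    push_cast at this
    rw [← this]; ring
  have pan : PP s h (a + h + n * h) (k + 1) * s (a + (n + 2 + k) * h) =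
      s (a + (n + 1) * h) * s (a + (n + 2) * h) * PP s h (a + 3 * h + n * h) k := by
    have := PP_succ s h (a + h + n * h) (k + 1)
    rw [PP_succ' s h _ (k + 1), PP_succ' s h _ k] at this
    have e : a + h + n * h + h + h = a + 3 * h + n * h := by ring
    have e' : a + h + n * h + h = a + (n + 2) * h := by ring
    have e'' : a + h + n * h = a + (n + 1) * h := by ring
    have e''' : a + (n + 1) * h + (k + 1) * h = a + (n + 2 + k) * h := by ring
    rw [e, e', e''] at this
    push_cast at this
    rw [e'''] at this
    rw [e'', ← this]; ring
  have q1 : s (a + (k + 1) * h) ≠ 0 := ga.ne (k + 1) (by push_cast; ring)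
  have q2 : s (a - e + (k + 1) * h) ≠ 0 := gae.ne (k + 1) (by push_cast; ring)
  have q3 : s (a + (n + 2 + k) * h) ≠ 0 := ga.ne (n + 2 + k) (by push_cast; ring)
  have q4 : s (a - e) ≠ 0 := gae.ne 0 (by push_cast; ring)
  have q5 : s (a + h - e) ≠ 0 := gae.ne 1 (by push_cast; ring)
  have q6 : s a ≠ 0 := ga.ne 0 (by push_cast; ring)
  have q7 : s (a + h) ≠ 0 := ga.ne 1 (by push_cast; ring)
  have q8 : s (a + 2 * h) ≠ 0 := ga.ne 2 (by push_cast; ring)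
  have q9 : s (a + (n + 1) * h) ≠ 0 := ga.ne (n + 1) (by push_cast; ring)
  have q10 : s (a + (n + 2) * h) ≠ 0 := ga.ne (n + 2) (by push_cast; ring)
  have q11 : s (a + h - b) ≠ 0 := gab.ne 1 (by push_cast; ring)
  have q12 : s (a + h - c) ≠ 0 := gac.ne 1 (by push_cast; ring)
  have q13 : s (a + h - d) ≠ 0 := gad.ne 1 (by push_cast; ring)
  have q14 : s ((k + 1) * h) ≠ 0 := by
    have := hnz (k + 1) (by omega) (by omega)
    push_cast at this
    exact this
  have r1 : PP s h (a + 2 * h - b) k ≠ 0 := gab.PP k 2 (by push_cast; ring)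
  have r2 : PP s h (a + 2 * h - c) k ≠ 0 := gac.PP k 2 (by push_cast; ring)
  have r3 : PP s h (a + 2 * h - d) k ≠ 0 := gad.PP k 2 (by push_cast; ring)
  have r4 : PP s h (a + 2 * h - e) k ≠ 0 := gae.PP k 2 (by push_cast; ring)
  have r5 : PP s h (a + 3 * h + n * h) k ≠ 0 := ga.PP k (n + 3) (by push_cast; ring)
  have r6 : PP s h h k ≠ 0 := by
    refine Finset.prod_ne_zero_iff.2 fun j hj => ?_
    have := hnz (j + 1) (by omega) (by have := Finset.mem_range.1 hj; omega)
    push_cast at this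
    convert this using 2
    ring
  rw [← eq_div_iff q1] at pa
  rw [← eq_div_iff q2] at pae
  rw [← eq_div_iff q3] at pan
  unfold FTt
  have u1 : a + h - (e + h) = a - e := by ring
  have u2 : a + 2 * h + h - (b + h) = a + 2 * h - b := by ring
  have u3 : a + 2 * h + h - (c + h) = a + 2 * h - c := by ring
  have u4 : a + 2 * h + h - (d + h) = a + 2 * h - d := by ring
  have u5 : a + 2 * h + h - (e + h) = a + 2 * h - e := by ring
  have u6 : a + 2 * h + h + n * h = a + 3 * h + n * h := by ring
  have u7 : a + h + ((n + 1 : ℕ) : ℂ) * h = a + (n + 2) * h := by push_cast; ring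
  have u8 : -((n + 1 : ℕ) : ℂ) * h = -((n + 1) * h) := by push_cast; ring
  have u9 : -((n + 1) * h) + h = - n * h := by push_cast; ring
  have u10 : a + 2 * ((k + 1 : ℕ) : ℂ) * h = a + 2 * h + 2 * k * h := by push_cast; ring
  have v1 : a + h - b + h = a + 2 * h - b := by ring
  have v2 : a + h - c + h = a + 2 * h - c := by ring
  have v3 : a + h - d + h = a + 2 * h - d := by ring
  have v4 : a + h - e + h = a + 2 * h - e := by ring
  have v5 : e + h + k * h = e + (k + 1) * h := by ring
  have v6 : h + k * h = (k + 1) * h := by ring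
  have v7 : - n * h + k * h = (-n + k) * h := by ring
  have v8 : a + (n + 2) * h + h = a + 3 * h + n * h := by ring
  rw [u1, u2, u3, u4, u5, u6, u7, u8, u10, pa, pae, pan, PP_succ' s h b, PP_succ' s h c,
    PP_succ' s h d, PP_succ' s h e, PP_succ s h (e + h), PP_succ' s h (-((n + 1) * h)), u9,
    PP_succ s h (-n * h), PP_succ s h h, PP_succ' s h (a + h - b), PP_succ' s h (a + h - c),
    PP_succ' s h (a + h - d), PP_succ' s h (a + h - e), PP_succ' s h (a + (n + 2) * h),
    v1, v2, v3, v4, v5, v6, v7, v8, hodd]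
  generalize PP s h (a + 2 * h - b) k = R1 at *
  generalize PP s h (a + 2 * h - c) k = R2 at *
  generalize PP s h (a + 2 * h - d) k = R3 at *
  generalize PP s h (a + 2 * h - e) k = R4 at *
  generalize PP s h (a + 3 * h + n * h) k = R5 at *
  generalize PP s h h k = R6 at *
  generalize s (a + (k + 1) * h) = Q1 at *
  generalize s (a - e + (k + 1) * h) = Q2 at *
  generalize s (a + (n + 2 + k) * h) = Q3 at *
  generalize s (a - e) = Q4 at *
  generalize s (a + h - e) = Q5 at *
  generalize s (a + h) = Q7 at *
  generalize s (a + 2 * h) = Q8 at *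
  generalize s (a + (n + 1) * h) = Q9 at *
  generalize s (a + (n + 2) * h) = Q10 at *
  generalize s (a + h - b) = Q11 at *
  generalize s (a + h - c) = Q12 at *
  generalize s (a + h - d) = Q13 at *
  generalize s ((k + 1) * h) = Q14 at *
  generalize s (e + (k + 1) * h) = Q15 at *
  generalize s ((n + 1) * h) = Q16 at *
  generalize s ((n + 1) * h + e) = Q17 at *
  generalize s ((n + 1) * h + a - e) = Q18 at *
  generalize s ((-n + k) * h) = Q19 at *
  generalize s (a + 2 * h + 2 * k * h) = Q20 at *
  generalize PP s h (a + 2 * h) k = R7 at *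
  generalize PP s h (b + h) k = R8 at *
  generalize PP s h (c + h) k = R9 at *
  generalize PP s h (d + h) k = R10 at *
  generalize PP s h (e + h) k = R11 at *
  generalize PP s h (-n * h) k = R12 at *
  generalize s a = Q6 at *
  generalize s b = B at *
  generalize s c = C at *
  generalize s d = D at *
  generalize s e = E at *
  clear e1 e2 e3 e4 e5 e6 e7 e8 e9 e10 e11 e12 u1 u2 u3 u4 u5 u6 u7 u8 u9 u10 v1 v2 v3 v4 v5 v6 v7 v8 pa pae pan
  field_simp
  linear_combination (-Q20 * R7 * B * R8 * C * R9 * D * R10 * R11 * R12) * key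

lemma FT_rhs (s : ℂ → ℂ) (h3 : ThreeTerm s) (b c d M : ℂ) :
    s M * s (M - b - c) * s (M - b - d) * s (M - c - d) =
      s (M - b) * s (M - c) * s (M - d) * s (M - b - c - d) +
        s b * s c * s d * s (2 * M - b - c - d) := by
  have key := h3 (M - (b + c) / 2) ((b + c) / 2) (M - d - (b + c) / 2) ((c - b) / 2)
  ring_nf at key ⊢
  linear_combination key

lemma FTt_zero (s : ℂ → ℂ) (h : ℂ) (n : ℕ) (a b c d e : ℂ) (ha : s a ≠ 0) :
    FTt s h n 0 a b c d e = 1 := by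
  simp [FTt, PP_zero, ha]

lemma FTt_top (s : ℂ → ℂ) (hodd : ∀ x, s (-x) = - s x) (h : ℂ) (n : ℕ) (a b c d e : ℂ) :
    FTt s h n (n + 1) a b c d e = 0 := by
  have h0 : s 0 = 0 := by
    have := hodd 0
    rw [neg_zero] at this
    exact self_eq_neg.1 this
  have : PP s h (-n * h) (n + 1) = 0 := by
    rw [PP_succ]
    have : -(n : ℂ) * h + n * h = 0 := by ring
    rw [this, h0, mul_zero]
  rw [FTt, this]
  simp

/-- Right-hand side of the Frenkel-Turaev sum -/
noncomputable def FTr (s : ℂ → ℂ) (h : ℂ) (n : ℕ) (a b c d : ℂ) : ℂ :=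
  PP s h (a + h) n * PP s h (a + h - b - c) n * PP s h (a + h - b - d) n *
    PP s h (a + h - c - d) n / (PP s h (a + h - b) n * PP s h (a + h - c) n *
    PP s h (a + h - d) n * PP s h (a + h - b - c - d) n)

set_option maxHeartbeats 2000000 in
lemma FTr_step (s : ℂ → ℂ) (hodd : ∀ x, s (-x) = - s x) (h3 : ThreeTerm s) (h : ℂ) (n : ℕ)
    (a b c d e : ℂ) (he : b + c + d + e = 2 * a + (n + 1) * h)
    (ga : GG s h a) (gab : GG s h (a - b)) (gac : GG s h (a - c)) (gad : GG s h (a - d))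
    (gae : GG s h (a - e)) :
    FTr s h (n + 1) a b c d = FTr s h n a b c d +
      (- s (a + 2 * h) * s (a + h) * s b * s c * s d * s ((n + 1) * h + e) *
        s ((n + 1) * h + a - e) / (s (a + h - b) * s (a + h - c) * s (a + h - d) *
        s (a + h - e) * s (a - e) * s (a + (n + 1) * h) * s (a + (n + 2) * h))) *
      FTr s h n (a + 2 * h) (b + h) (c + h) (d + h) := by
  have he' : e = 2 * a + (n + 1) * h - b - c - d := by linear_combination he
  have key := FT_rhs s h3 b c d (a + (n + 1) * h)
  have e1 : (n + 1) * h + e = 2 * (a + (n + 1) * h) - b - c - d := by rw [he']; ring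
  have e2 : (n + 1) * h + a - e = -(a - b - c - d) := by rw [he']; ring
  have e3 : a - e = -(a + (n + 1) * h - b - c - d) := by rw [he']; ring
  have e4 : a + h - e = -(a + n * h - b - c - d) := by rw [he']; ring
  have gx : GG s h (a - b - c - d) := (gae.neg hodd (y := e - a) (by ring)).shift (-(n + 1)) (by
    rw [he']; push_cast; ring)
  rw [e1, e2, e3, e4, hodd, hodd, hodd]
  have pa : s (a + h) * s (a + 2 * h) * PP s h (a + 3 * h) n =
      PP s h (a + h) n * s (a + (n + 1) * h) * s (a + (n + 2) * h) := by
    have := PP_succ s h (a + h) (n + 1)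
    rw [PP_succ s h (a + h) n, PP_succ' s h (a + h) (n + 1), PP_succ' s h (a + h + h) n] at this
    have z1 : a + h + h = a + 2 * h := by ring
    have z2 : a + 2 * h + h = a + 3 * h := by ring
    have z3 : a + h + n * h = a + (n + 1) * h := by ring
    have z4 : a + h + ((n + 1 : ℕ) : ℂ) * h = a + (n + 2) * h := by push_cast; ring
    rw [z1, z2, z3, z4] at this
    rw [← this]; ring
  have pb : ∀ b : ℂ, s (a + h - b) * PP s h (a + 2 * h - b) n =
      PP s h (a + h - b) n * s (a + (n + 1) * h - b) := by
    intro b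
    have := PP_succ s h (a + h - b) n
    rw [PP_succ'] at this
    have z1 : a + h - b + h = a + 2 * h - b := by ring
    have z2 : a + h - b + n * h = a + (n + 1) * h - b := by ring
    rwa [z1, z2] at this
  have pe : PP s h (a - b - c - d) n * s (a + n * h - b - c - d) =
      s (a - b - c - d) * PP s h (a + h - b - c - d) n := by
    have := PP_succ s h (a - b - c - d) n
    rw [PP_succ'] at this
    have z1 : a - b - c - d + h = a + h - b - c - d := by ring
    have z2 : a - b - c - d + n * h = a + n * h - b - c - d := by ring
    rw [z1, z2] at this
    exact this.symm
  have q1 : s (a + (n + 1) * h - b - c - d) ≠ 0 := gx.ne (n + 1) (by push_cast; ring)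
  have q2 : s (a + n * h - b - c - d) ≠ 0 := gx.ne n (by push_cast; ring)
  have q3 : s (a - b - c - d) ≠ 0 := gx.ne 0 (by push_cast; ring)
  have q7 : s (a + h) ≠ 0 := ga.ne 1 (by push_cast; ring)
  have q8 : s (a + 2 * h) ≠ 0 := ga.ne 2 (by push_cast; ring)
  have q9 : s (a + (n + 1) * h) ≠ 0 := ga.ne (n + 1) (by push_cast; ring)
  have q10 : s (a + (n + 2) * h) ≠ 0 := ga.ne (n + 2) (by push_cast; ring)
  have q11 : s (a + h - b) ≠ 0 := gab.ne 1 (by push_cast; ring)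
  have q12 : s (a + h - c) ≠ 0 := gac.ne 1 (by push_cast; ring)
  have q13 : s (a + h - d) ≠ 0 := gad.ne 1 (by push_cast; ring)
  have q14 : s (a + (n + 1) * h - b) ≠ 0 := gab.ne (n + 1) (by push_cast; ring)
  have q15 : s (a + (n + 1) * h - c) ≠ 0 := gac.ne (n + 1) (by push_cast; ring)
  have q16 : s (a + (n + 1) * h - d) ≠ 0 := gad.ne (n + 1) (by push_cast; ring)
  have r1 : PP s h (a + h - b) n ≠ 0 := gab.PP n 1 (by push_cast; ring)
  have r2 : PP s h (a + h - c) n ≠ 0 := gac.PP n 1 (by push_cast; ring)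
  have r3 : PP s h (a + h - d) n ≠ 0 := gad.PP n 1 (by push_cast; ring)
  have r4 : PP s h (a + h - b - c - d) n ≠ 0 := gx.PP n 1 (by push_cast; ring)
  have pb1 := pb b
  have pb2 := pb c
  have pb3 := pb d
  rw [mul_comm, ← eq_div_iff q11] at pb1
  rw [mul_comm, ← eq_div_iff q12] at pb2
  rw [mul_comm, ← eq_div_iff q13] at pb3
  rw [← eq_div_iff q2] at pe
  rw [mul_comm, ← eq_div_iff (mul_ne_zero q7 q8)] at pa
  unfold FTr
  have u1 : a + 2 * h + h - (b + h) - (c + h) - (d + h) = a - b - c - d := by ring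
  have u2 : a + 2 * h + h - (b + h) - (c + h) = a + h - b - c := by ring
  have u3 : a + 2 * h + h - (b + h) - (d + h) = a + h - b - d := by ring
  have u4 : a + 2 * h + h - (c + h) - (d + h) = a + h - c - d := by ring
  have u5 : a + 2 * h + h - (b + h) = a + 2 * h - b := by ring
  have u6 : a + 2 * h + h - (c + h) = a + 2 * h - c := by ring
  have u7 : a + 2 * h + h - (d + h) = a + 2 * h - d := by ring
  have u8 : a + 2 * h + h = a + 3 * h := by ring
  rw [u1, u2, u3, u4, u5, u6, u7, u8, pa, pb1, pb2, pb3, pe]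
  simp only [PP_succ]
  have v1 : a + h + n * h = a + (n + 1) * h := by ring
  have v2 : a + h - b - c + n * h = a + (n + 1) * h - b - c := by ring
  have v3 : a + h - b - d + n * h = a + (n + 1) * h - b - d := by ring
  have v4 : a + h - c - d + n * h = a + (n + 1) * h - c - d := by ring
  have v5 : a + h - b + n * h = a + (n + 1) * h - b := by ring
  have v6 : a + h - c + n * h = a + (n + 1) * h - c := by ring
  have v7 : a + h - d + n * h = a + (n + 1) * h - d := by ring
  have v8 : a + h - b - c - d + n * h = a + (n + 1) * h - b - c - d := by ring
  rw [v1, v2, v3, v4, v5, v6, v7, v8]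
  clear u1 u2 u3 u4 u5 u6 u7 u8 v1 v2 v3 v4 v5 v6 v7 v8 e1 e2 e3 e4 pb pb1 pb2 pb3 pa pe
  generalize s (a + (n + 1) * h - b - c - d) = Q1 at *
  generalize s (a + n * h - b - c - d) = Q2 at *
  generalize s (a - b - c - d) = Q3 at *
  generalize s (a + h) = Q7 at *
  generalize s (a + 2 * h) = Q8 at *
  generalize s (2 * (a + (n + 1) * h) - b - c - d) = Q17 at *
  generalize s (a + (n + 1) * h - b - c) = Q18 at *
  generalize s (a + (n + 1) * h - b - d) = Q19 at *
  generalize s (a + (n + 1) * h - c - d) = Q20 at *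
  generalize s (a + (n + 1) * h - b) = Q14 at *
  generalize s (a + (n + 1) * h - c) = Q15 at *
  generalize s (a + (n + 1) * h - d) = Q16 at *
  generalize s (a + (n + 1) * h) = Q9 at *
  generalize s (a + (n + 2) * h) = Q10 at *
  generalize s (a + h - b) = Q11 at *
  generalize s (a + h - c) = Q12 at *
  generalize s (a + h - d) = Q13 at *
  generalize PP s h (a + h - b - c - d) n = R4 at *
  generalize PP s h (a + h - b - c) n = R5 at *
  generalize PP s h (a + h - b - d) n = R6 at *
  generalize PP s h (a + h - c - d) n = R7 at *
  generalize PP s h (a + h - b) n = R1 at *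
  generalize PP s h (a + h - c) n = R2 at *
  generalize PP s h (a + h - d) n = R3 at *
  generalize PP s h (a + h) n = R8 at *
  generalize s b = B at *
  generalize s c = C at *
  generalize s d = D at *
  field_simp
  linear_combination (R5 * R6 * R7 * R8) * key

theorem FT_sum (s : ℂ → ℂ) (hodd : ∀ x, s (-x) = - s x) (h3 : ThreeTerm s) (h : ℂ) (n : ℕ)
    (hnz : ∀ i : ℕ, 1 ≤ i → i ≤ n → s (i * h) ≠ 0)
    (a b c d e : ℂ) (he : b + c + d + e = 2 * a + (n + 1) * h)
    (ga : GG s h a) (gab : GG s h (a - b)) (gac : GG s h (a - c)) (gad : GG s h (a - d))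
    (gae : GG s h (a - e)) :
    ∑ k ∈ Finset.range (n + 1), FTt s h n k a b c d e = FTr s h n a b c d := by
  induction n generalizing a b c d e with
  | zero =>
    have := ga 0
    simp at this
    simp [FTt_zero, this, FTr, PP_zero]
  | succ n ih =>
    have q : s a ≠ 0 := ga.ne 0 (by push_cast; ring)
    have hnz' : ∀ i : ℕ, 1 ≤ i → i ≤ n → s (i * h) ≠ 0 := fun i h1 h2 => hnz i h1 (by omega)
    obtain ⟨e', rfl⟩ : ∃ e', e = e' + h := ⟨e - h, by ring⟩
    have gae' : GG s h (a - e') := gae.shift 1 (by push_cast; ring)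
    have he1 : b + c + d + e' = 2 * a + (n + 1) * h := by
      push_cast at he
      linear_combination he
    have ih1 := ih hnz' a b c d e' he1 ga gab gac gad gae'
    have ih2 := ih hnz' (a + 2 * h) (b + h) (c + h) (d + h) (e' + h) (by linear_combination he1)
      (ga.shift 2 (by push_cast; ring)) (gab.shift 1 (by push_cast; ring))
      (gac.shift 1 (by push_cast; ring)) (gad.shift 1 (by push_cast; ring))
      (gae'.shift 1 (by push_cast; ring))
    rw [FTr_step s hodd h3 h n a b c d e' he1 ga gab gac gad gae', ← ih1, ← ih2,
      Finset.sum_range_succ', FTt_zero _ _ _ _ _ _ _ _ q]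
    rw [Finset.sum_congr rfl fun k hk => FT_step s hodd h3 h n k
      (by have := Finset.mem_range.1 hk; omega) hnz a b c d e' ga gab gac gad gae',
      Finset.sum_add_distrib, ← Finset.mul_sum,
      Finset.sum_range_succ' (fun k => FTt s h n k a b c d e'), FTt_zero _ _ _ _ _ _ _ _ q,
      Finset.sum_range_succ (fun k => FTt s h n (k + 1) a b c d e'), FTt_top s hodd]
    ring

/-- term of the additive `₁₀ω₉` -/
noncomputable def WWt (s : ℂ → ℂ) (h : ℂ) (n k : ℕ) (a b c d e f g : ℂ) : ℂ :=
  s (a + 2 * k * h) / s a *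
    (PP s h a k * PP s h b k * PP s h c k * PP s h d k * PP s h e k * PP s h f k * PP s h g k *
      PP s h (-n * h) k) /
    (PP s h h k * PP s h (a + h - b) k * PP s h (a + h - c) k * PP s h (a + h - d) k *
      PP s h (a + h - e) k * PP s h (a + h - f) k * PP s h (a + h - g) k *
      PP s h (a + h + n * h) k)

/-- outer factor -/
noncomputable def XX (s : ℂ → ℂ) (h : ℂ) (j : ℕ) (a b c d l : ℂ) : ℂ :=
  s (l + 2 * j * h) / s l *
    (PP s h l j * PP s h (l + b - a) j * PP s h (l + c - a) j * PP s h (l + d - a) j) /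
    (PP s h h j * PP s h (a + h - b) j * PP s h (a + h - c) j * PP s h (a + h - d) j)

/-- inner factor -/
noncomputable def YY (s : ℂ → ℂ) (h : ℂ) (n j k : ℕ) (a e f g l : ℂ) : ℂ :=
  s (a + 2 * k * h) / s a *
    (PP s h a k * PP s h e k * PP s h f k * PP s h g k * PP s h (-n * h) k) /
    (PP s h h k * PP s h (a + h - e) k * PP s h (a + h - f) k * PP s h (a + h - g) k *
      PP s h (a + h + n * h) k) *
    (PP s h (a - l) k / PP s h (l + h) k) *
    (PP s h (a + k * h) j * PP s h (-k * h) j /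
      (PP s h (l + h - a - k * h) j * PP s h (l + h + k * h) j))

lemma hh_ne (s : ℂ → ℂ) (h : ℂ) (n k : ℕ) (hk : k ≤ n)
    (hnz : ∀ i : ℕ, 1 ≤ i → i ≤ n → s (i * h) ≠ 0) : PP s h h k ≠ 0 := by
  refine Finset.prod_ne_zero_iff.2 fun j hj => ?_
  have := hnz (j + 1) (by omega) (by have := Finset.mem_range.1 hj; omega)
  push_cast at this
  convert this using 2
  ring

set_option maxHeartbeats 1000000 in
lemma WW_expand (s : ℂ → ℂ) (hodd : ∀ x, s (-x) = - s x) (h3 : ThreeTerm s) (h : ℂ) (n k : ℕ)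
    (hk : k ≤ n) (hnz : ∀ i : ℕ, 1 ≤ i → i ≤ n → s (i * h) ≠ 0)
    (a b c d e f g l : ℂ) (hl : l = 2 * a + h - b - c - d)
    (gl : GG s h l) (gal : GG s h (a - l))
    (gab : GG s h (a - b)) (gac : GG s h (a - c)) (gad : GG s h (a - d)) :
    WWt s h n k a b c d e f g =
      ∑ j ∈ Finset.range (k + 1), XX s h j a b c d l * YY s h n j k a e f g l := by
  have ft := FT_sum s hodd h3 h k (fun i h1 h2 => hnz i h1 (by omega)) l (l + b - a) (l + c - a)
    (l + d - a) (a + k * h) (by rw [hl]; ring) gl (gab.shift 0 (by push_cast; ring))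
    (gac.shift 0 (by push_cast; ring)) (gad.shift 0 (by push_cast; ring))
    ((gal.neg hodd (y := l - a) (by ring)).shift (-k) (by push_cast; ring))
  have r1 : PP s h (a + h - b) k ≠ 0 := gab.PP k 1 (by push_cast; ring)
  have r2 : PP s h (a + h - c) k ≠ 0 := gac.PP k 1 (by push_cast; ring)
  have r3 : PP s h (a + h - d) k ≠ 0 := gad.PP k 1 (by push_cast; ring)
  have r4 : PP s h (a - l) k ≠ 0 := gal.PP k 0 (by push_cast; ring)
  have r5 : PP s h (l + h) k ≠ 0 := gl.PP k 1 (by push_cast; ring)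
  have split : ∀ j, XX s h j a b c d l * YY s h n j k a e f g l =
      (s (a + 2 * k * h) / s a *
    (PP s h a k * PP s h e k * PP s h f k * PP s h g k * PP s h (-n * h) k) /
    (PP s h h k * PP s h (a + h - e) k * PP s h (a + h - f) k * PP s h (a + h - g) k *
      PP s h (a + h + n * h) k) *
    (PP s h (a - l) k / PP s h (l + h) k)) *
      FTt s h k j l (l + b - a) (l + c - a) (l + d - a) (a + k * h) := by
    intro j
    unfold XX YY FTt
    have u1 : l + h - (l + b - a) = a + h - b := by ring
    have u2 : l + h - (l + c - a) = a + h - c := by ring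
    have u3 : l + h - (l + d - a) = a + h - d := by ring
    have u4 : l + h - (a + k * h) = l + h - a - k * h := by ring
    rw [u1, u2, u3, u4]
    simp only [div_eq_mul_inv, mul_inv]
    ring
  simp only [split]
  rw [← Finset.mul_sum, ft]
  unfold FTr WWt
  have u1 : l + h - (l + b - a) - (l + c - a) - (l + d - a) = a - l := by rw [hl]; ring
  have u2 : l + h - (l + b - a) - (l + c - a) = d := by rw [hl]; ring
  have u3 : l + h - (l + b - a) - (l + d - a) = c := by rw [hl]; ring
  have u4 : l + h - (l + c - a) - (l + d - a) = b := by rw [hl]; ring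
  have u5 : l + h - (l + b - a) = a + h - b := by ring
  have u6 : l + h - (l + c - a) = a + h - c := by ring
  have u7 : l + h - (l + d - a) = a + h - d := by ring
  rw [u1, u2, u3, u4, u5, u6, u7]
  simp only [div_eq_mul_inv, mul_inv]
  have w1 := mul_inv_cancel₀ r4
  have w2 := mul_inv_cancel₀ r5
  generalize (PP s h (a - l) k)⁻¹ = I1 at *
  generalize (PP s h (l + h) k)⁻¹ = I2 at *
  generalize (PP s h (a - l) k) = I3 at *
  generalize (PP s h (l + h) k) = I4 at *
  set Z := s (a + 2 * ↑k * h) * (s a)⁻¹ *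
          (PP s h a k * PP s h b k * PP s h c k * PP s h d k * PP s h e k * PP s h f k * PP s h g k *
        PP s h (-↑n * h) k) *
      ((PP s h h k)⁻¹ * (PP s h (a + h - b) k)⁻¹ * (PP s h (a + h - c) k)⁻¹ * (PP s h (a + h - d) k)⁻¹ *
              (PP s h (a + h - e) k)⁻¹ *
            (PP s h (a + h - f) k)⁻¹ *
          (PP s h (a + h - g) k)⁻¹ *
        (PP s h (a + h + ↑n * h) k)⁻¹) with hZ
  have : Z = Z * ((I3 * I1) * (I4 * I2)) := by rw [w1, w2]; ring
  rw [this, hZ]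
  ring

set_option maxHeartbeats 1000000 in
lemma YY_shift (s : ℂ → ℂ) (hodd : ∀ x, s (-x) = - s x) (h : ℂ) (n j i : ℕ)
    (hk : j + i ≤ n) (hnz : ∀ i : ℕ, 1 ≤ i → i ≤ n → s (i * h) ≠ 0)
    (a e f g l : ℂ) 
    (ga : GG s h a) (gal : GG s h (a - l)) :
    YY s h n j (j + i) a e f g l =
      s (a + 2 * j * h) / s a * (PP s h a (2 * j) / PP s h (l + h) (2 * j)) *
      ((PP s h e j * PP s h f j * PP s h g j * PP s h (-n * h) j) /
      (PP s h (a + h - e) j * PP s h (a + h - f) j * PP s h (a + h - g) j *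
      PP s h (a + h + n * h) j)) *
      FTt s h (n - j) i (a + 2 * j * h) (e + j * h) (f + j * h) (a - l) (g + j * h) := by
  have pa : PP s h a (j + i) * PP s h (a + ((j + i : ℕ) : ℂ) * h) j =
      PP s h a (2 * j) * PP s h (a + 2 * j * h) i := by
    rw [← PP_add, show j + i + j = 2 * j + i by ring, PP_add]
    push_cast
    rfl
  have pl : PP s h (l + h) (j + i) * PP s h (l + h + ((j + i : ℕ) : ℂ) * h) j =
      PP s h (l + h) (2 * j) * PP s h (a + 2 * j * h + h - (a - l)) i := by
    rw [← PP_add, show j + i + j = 2 * j + i by ring, PP_add]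
    push_cast
    congr 2
    ring
  have ph : PP s h h (j + i) = PP s h h i * PP s h (h + i * h) j := by
    rw [add_comm j i, PP_add]
  have ph' : PP s h (-((j + i : ℕ) : ℂ) * h) j = (-1) ^ j * PP s h (h + i * h) j := by
    apply PP_reflect s hodd
    push_cast
    ring
  have pal : PP s h (a - l) (j + i) = PP s h (a - l) i * PP s h (a - l + i * h) j := by
    rw [add_comm j i, PP_add]
  have pal' : PP s h (l + h - a - ((j + i : ℕ) : ℂ) * h) j = (-1) ^ j * PP s h (a - l + i * h) j := by
    apply PP_reflect s hodd
    push_cast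
    ring
  have n1 : PP s h (h + i * h) j ≠ 0 := by
    have := hh_ne s h n (j + i) hk hnz
    rw [ph] at this
    exact right_ne_zero_of_mul this
  have n2 : PP s h (a - l + i * h) j ≠ 0 := gal.PP j i (by push_cast; ring)
  have n3 : s (a + 2 * j * h) ≠ 0 := ga.ne (2 * j) (by push_cast; ring)
  have n4 : ((-1 : ℂ)) ^ j ≠ 0 := pow_ne_zero _ (by norm_num)
  have hnj : ((n - j : ℕ) : ℂ) = n - j := by rw [Nat.cast_sub (by omega)]
  unfold YY FTt
  rw [ph, ph', pal, pal', PP_add s h e, PP_add s h f, PP_add s h g, PP_add s h (-n * h),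
    PP_add s h (a + h - e), PP_add s h (a + h - f), PP_add s h (a + h - g),
    PP_add s h (a + h + n * h), hnj]
  have u0 : a + 2 * j * h + 2 * i * h = a + 2 * ((j + i : ℕ) : ℂ) * h := by push_cast; ring
  have u1 : a + 2 * j * h + h - (e + j * h) = a + h - e + j * h := by ring
  have u2 : a + 2 * j * h + h - (f + j * h) = a + h - f + j * h := by ring
  have u3 : a + 2 * j * h + h - (g + j * h) = a + h - g + j * h := by ring
  have u4 : a + 2 * j * h + h + (n - j) * h = a + h + n * h + j * h := by ring
  have u5 : -(n - j) * h = -n * h + j * h := by ring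
  rw [u0, u1, u2, u3, u4, u5]
  have w1 := mul_inv_cancel₀ n1
  have w2 := mul_inv_cancel₀ n2
  have w3 := mul_inv_cancel₀ n3
  have w4 := mul_inv_cancel₀ n4
  have pl2 := congrArg (·⁻¹) pl
  simp only [mul_inv] at pl2
  simp only [div_eq_mul_inv, mul_inv]
  generalize s (a + 2 * j * h) = I1 at *
  generalize PP s h (h + i * h) j = I2 at *
  generalize PP s h (a - l + i * h) j = I3 at *
  generalize ((-1 : ℂ)) ^ j = I4 at *
  generalize PP s h a (j + i) = A1 at *
  generalize PP s h (a + ((j + i : ℕ) : ℂ) * h) j = A2 at *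
  generalize PP s h a (2 * j) = A3 at *
  generalize PP s h (a + 2 * j * h) i = A4 at *
  generalize (PP s h (l + h) (j + i))⁻¹ = B1 at *
  generalize (PP s h (l + h + ((j + i : ℕ) : ℂ) * h) j)⁻¹ = B2 at *
  generalize (PP s h (l + h) (2 * j))⁻¹ = B3 at *
  generalize (PP s h (a + 2 * j * h + h - (a - l)) i)⁻¹ = B4 at *
  generalize I1⁻¹ = J1 at *
  generalize I2⁻¹ = J2 at *
  generalize I3⁻¹ = J3 at *
  generalize I4⁻¹ = J4 at *
  set R := s (a + 2 * ((j + i : ℕ) : ℂ) * h) * (s a)⁻¹ *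
    (PP s h e j * PP s h (e + j * h) i * (PP s h f j * PP s h (f + j * h) i) *
      (PP s h g j * PP s h (g + j * h) i) * (PP s h (-n * h) j * PP s h (-n * h + j * h) i)) *
    ((PP s h h i)⁻¹ * ((PP s h (a + h - e) j)⁻¹ * (PP s h (a + h - e + j * h) i)⁻¹) *
      ((PP s h (a + h - f) j)⁻¹ * (PP s h (a + h - f + j * h) i)⁻¹) *
      ((PP s h (a + h - g) j)⁻¹ * (PP s h (a + h - g + j * h) i)⁻¹) *
      ((PP s h (a + h + n * h) j)⁻¹ * (PP s h (a + h + n * h + j * h) i)⁻¹)) *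
      PP s h (a - l) i with hR
  trans R * (A1 * A2) * (B1 * B2) * (I2 * J2) * (I3 * J3) * (I4 * J4)
  · rw [hR]; ring
  trans R * (A3 * A4) * (B3 * B4) * (I1 * J1)
  · rw [pa, pl2, w1, w2, w3, w4]; ring
  rw [hR]; ring

/-- prefactor -/
noncomputable def Pref (s : ℂ → ℂ) (h : ℂ) (n : ℕ) (a e f l : ℂ) : ℂ :=
  PP s h (a + h) n * PP s h (a + h - e - f) n * PP s h (l + h - e) n * PP s h (l + h - f) n /
  (PP s h (a + h - e) n * PP s h (a + h - f) n * PP s h (l + h - e - f) n * PP s h (l + h) n)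

set_option maxHeartbeats 1000000 in
lemma term_final (s : ℂ → ℂ) (hodd : ∀ x, s (-x) = - s x) (h : ℂ) (n j m : ℕ)
    (hn : n = j + m) 
    (a b c d e f g l : ℂ) (hg : e + f + g = a + l + (n + 1) * h)
    (ga : GG s h a) (gl : GG s h l) 
    (gae : GG s h (a - e)) (gaf : GG s h (a - f)) (gag : GG s h (a - g))
    (gle : GG s h (l - e)) (glf : GG s h (l - f)) (glg : GG s h (l - g)) :
    XX s h j a b c d l * 
      (s (a + 2 * j * h) / s a * (PP s h a (2 * j) / PP s h (l + h) (2 * j)) *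
      ((PP s h e j * PP s h f j * PP s h g j * PP s h (-n * h) j) /
      (PP s h (a + h - e) j * PP s h (a + h - f) j * PP s h (a + h - g) j *
      PP s h (a + h + n * h) j)) *
      FTr s h m (a + 2 * j * h) (e + j * h) (f + j * h) (a - l)) =
    Pref s h n a e f l * WWt s h n j l (l + b - a) (l + c - a) (l + d - a) e f g := by
  have ha : s (a + 2 * j * h) * PP s h a (2 * j) * PP s h (a + 2 * j * h + h) m =
      s a * (PP s h (a + h) n * PP s h (a + h + n * h) j) := by
    have h1 : s (a + 2 * j * h) * PP s h a (2 * j) = s a * PP s h (a + h) (2 * j) := by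
      rw [← PP_succ', PP_succ]; push_cast; ring
    rw [h1, ← PP_add, hn, show j + m + j = 2 * j + m by ring, PP_add]
    push_cast
    rw [show a + h + 2 * j * h = a + 2 * j * h + h by ring]
    ring
  have hl : PP s h (l + h) (2 * j) * PP s h (a + 2 * j * h + h - (a - l)) m =
      PP s h (l + h) n * PP s h (l + h + n * h) j := by
    rw [← PP_add, hn, show j + m + j = 2 * j + m by ring, PP_add]
    push_cast
    rw [show l + h + 2 * j * h = a + 2 * j * h + h - (a - l) by ring]
  have hs : ∀ x, PP s h x n = PP s h x j * PP s h (x + j * h) m := by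
    intro x; rw [hn, PP_add]
  have hnm : (n : ℂ) = j + m := by rw [hn]; push_cast; ring
  have hr1 : PP s h (a + h - g) j * PP s h (l + h - e - f) m =
      (-1) ^ j * PP s h (l + h - e - f) n := by
    rw [PP_reflect s hodd h (a + h - g) (l + h - e - f + m * h) j, hn, add_comm j m, PP_add]
    · ring
    · linear_combination (-1 : ℂ) * hg - h * hnm
  have hr2 : PP s h (l + h - g) j * PP s h (a + h - e - f) m =
      (-1) ^ j * PP s h (a + h - e - f) n := by
    rw [PP_reflect s hodd h (l + h - g) (a + h - e - f + m * h) j, hn, add_comm j m, PP_add]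
    · ring
    · linear_combination (-1 : ℂ) * hg - h * hnm
  have n1 : s a ≠ 0 := ga.ne 0 (by push_cast; ring)
  have n2 : PP s h (a + h + n * h) j ≠ 0 := ga.PP j (n + 1) (by push_cast; ring)
  have n3 : PP s h (l + h - e) j ≠ 0 := gle.PP j 1 (by push_cast; ring)
  have n4 : PP s h (l + h - f) j ≠ 0 := glf.PP j 1 (by push_cast; ring)
  have n5 : PP s h (l + h - g) j ≠ 0 := glg.PP j 1 (by push_cast; ring)
  have n6 : ((-1 : ℂ)) ^ j ≠ 0 := pow_ne_zero _ (by norm_num)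
  unfold XX FTr Pref WWt
  have u1 : a + 2 * j * h + h - (e + j * h) - (f + j * h) - (a - l) = l + h - e - f := by ring
  have u2 : a + 2 * j * h + h - (e + j * h) - (f + j * h) = a + h - e - f := by ring
  have u3 : a + 2 * j * h + h - (e + j * h) - (a - l) = l + h - e + j * h := by ring
  have u4 : a + 2 * j * h + h - (f + j * h) - (a - l) = l + h - f + j * h := by ring
  have u5 : a + 2 * j * h + h - (e + j * h) = a + h - e + j * h := by ring
  have u6 : a + 2 * j * h + h - (f + j * h) = a + h - f + j * h := by ring
  have u7 : l + h - (l + b - a) = a + h - b := by ring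
  have u8 : l + h - (l + c - a) = a + h - c := by ring
  have u9 : l + h - (l + d - a) = a + h - d := by ring
  rw [u1, u2, u3, u4, u5, u6, u7, u8, u9, hs (l + h - e), hs (l + h - f), hs (a + h - e),
    hs (a + h - f)]
  clear u1 u2 u3 u4 u5 u6 u7 u8 u9 hs
  have hl2 := congrArg (·⁻¹) hl
  have hr3 := congrArg (·⁻¹) hr1
  simp only [mul_inv] at hl2 hr3
  have w1 := mul_inv_cancel₀ n1
  have w2 := mul_inv_cancel₀ n2
  have w3 := mul_inv_cancel₀ n3
  have w4 := mul_inv_cancel₀ n4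
  have w5 := mul_inv_cancel₀ n5
  have w6 := mul_inv_cancel₀ n6
  simp only [div_eq_mul_inv, mul_inv]
  generalize s a = I1 at *
  generalize I1⁻¹ = J1 at *
  generalize PP s h (a + h + n * h) j = I2 at *
  generalize I2⁻¹ = J2 at *
  generalize PP s h (l + h - e) j = I3 at *
  generalize I3⁻¹ = J3 at *
  generalize PP s h (l + h - f) j = I4 at *
  generalize I4⁻¹ = J4 at *
  generalize PP s h (l + h - g) j = I5 at *
  generalize I5⁻¹ = J5 at *
  generalize ((-1 : ℂ)) ^ j = I6 at *
  generalize I6⁻¹ = J6 at *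
  generalize s (a + 2 * j * h) = A1 at *
  generalize PP s h a (2 * j) = A2 at *
  generalize PP s h (a + 2 * j * h + h) m = A3 at *
  generalize PP s h (a + h) n = A4 at *
  generalize (PP s h (l + h) (2 * j))⁻¹ = B1 at *
  generalize (PP s h (a + 2 * j * h + h - (a - l)) m)⁻¹ = B2 at *
  generalize (PP s h (l + h) n)⁻¹ = B3 at *
  generalize (PP s h (l + h + n * h) j)⁻¹ = B4 at *
  generalize (PP s h (a + h - g) j)⁻¹ = C1 at *
  generalize (PP s h (l + h - e - f) m)⁻¹ = C2 at *
  generalize (PP s h (l + h - e - f) n)⁻¹ = C3 at *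
  generalize PP s h (a + h - e - f) m = D1 at *
  generalize PP s h (a + h - e - f) n = D2 at *
  set R := s (l + 2 * j * h) * (s l)⁻¹ *
    (PP s h l j * PP s h (l + b - a) j * PP s h (l + c - a) j * PP s h (l + d - a) j) *
    ((PP s h h j)⁻¹ * (PP s h (a + h - b) j)⁻¹ * (PP s h (a + h - c) j)⁻¹ * (PP s h (a + h - d) j)⁻¹)
    * (PP s h e j * PP s h f j * PP s h g j * PP s h (-n * h) j) *
    (PP s h (l + h - e + j * h) m * PP s h (l + h - f + j * h) m) *
    ((PP s h (a + h - e) j)⁻¹ * (PP s h (a + h - e + j * h) m)⁻¹ *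
     ((PP s h (a + h - f) j)⁻¹ * (PP s h (a + h - f + j * h) m)⁻¹)) with hR
  trans R * (A1 * A2 * A3) * J1 * J2 * (B1 * B2) * (C1 * C2) * D1
  · rw [hR]; ring
  trans R * (I3 * J3) * (I4 * J4) * A4 * (B3 * B4) * C3 * D2 * J5
  · rw [ha, hl2, hr3, w3, w4]
    have : D1 = D1 * (I5 * J5) := by rw [w5]; ring
    calc _ = R * (I1 * J1) * (I2 * J2) * A4 * (B3 * B4) * C3 * J6 * D1 := by ring
      _ = R * A4 * (B3 * B4) * C3 * J6 * (D1 * (I5 * J5)) := by rw [← this, w1, w2]; ring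
      _ = R * A4 * (B3 * B4) * C3 * J6 * J5 * (I5 * D1) := by ring
      _ = R * A4 * (B3 * B4) * C3 * J5 * (I6 * J6) * D2 := by rw [hr2]; ring
      _ = _ := by rw [w6]; ring
  rw [hR]; ring

theorem Bailey_generic (s : ℂ → ℂ) (hodd : ∀ x, s (-x) = - s x) (h3 : ThreeTerm s) (h : ℂ) (n : ℕ)
    (hnz : ∀ i : ℕ, 1 ≤ i → i ≤ n → s (i * h) ≠ 0)
    (a b c d e f g l : ℂ) (hl : l = 2 * a + h - b - c - d) 
    (hg : e + f + g = a + l + (n + 1) * h)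
    (ga : GG s h a) (gl : GG s h l) (gal : GG s h (a - l))
    (gab : GG s h (a - b)) (gac : GG s h (a - c)) (gad : GG s h (a - d))
    (gae : GG s h (a - e)) (gaf : GG s h (a - f)) (gag : GG s h (a - g))
    (gle : GG s h (l - e)) (glf : GG s h (l - f)) (glg : GG s h (l - g)) :
    ∑ k ∈ Finset.range (n + 1), WWt s h n k a b c d e f g =
      Pref s h n a e f l *
      ∑ k ∈ Finset.range (n + 1), WWt s h n k l (l + b - a) (l + c - a) (l + d - a) e f g := by
  rw [Finset.sum_congr rfl fun k hk => WW_expand s hodd h3 h n k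
    (by have := Finset.mem_range.1 hk; omega) hnz a b c d e f g l hl gl gal gab gac gad]
  rw [Finset.mul_sum]
  have sw := Finset.sum_sigma' (Finset.range (n + 1)) (fun k => Finset.range (k + 1))
    (fun k j => XX s h j a b c d l * YY s h n j k a e f g l)
  have sw2 : ∑ k ∈ Finset.range (n + 1), ∑ j ∈ Finset.range (k + 1),
      XX s h j a b c d l * YY s h n j k a e f g l = ∑ j ∈ Finset.range (n + 1),
      ∑ i ∈ Finset.range (n - j + 1), XX s h j a b c d l * YY s h n j (j + i) a e f g l := by
    rw [Finset.sum_sigma', Finset.sum_sigma']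
    refine Finset.sum_bij' (fun x _ => ⟨x.2, x.1 - x.2⟩) (fun x _ => ⟨x.1 + x.2, x.1⟩) ?_ ?_ ?_ ?_ ?_
    · rintro ⟨k, j⟩ hx
      simp only [Finset.mem_sigma, Finset.mem_range] at hx ⊢
      omega
    · rintro ⟨k, j⟩ hx
      simp only [Finset.mem_sigma, Finset.mem_range] at hx ⊢
      omega
    · rintro ⟨k, j⟩ hx
      simp only [Finset.mem_sigma, Finset.mem_range] at hx ⊢
      have : j + (k - j) = k := by omega
      simp [this]
    · rintro ⟨k, j⟩ hx
      simp
    · rintro ⟨k, j⟩ hx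
      simp only [Finset.mem_sigma, Finset.mem_range] at hx ⊢
      have : j + (k - j) = k := by omega
      simp [this]
  rw [sw2]
  apply Finset.sum_congr rfl
  intro j hj
  have hj' : j ≤ n := by have := Finset.mem_range.1 hj; omega
  have hnj : ((n - j : ℕ) : ℂ) = n - j := by rw [Nat.cast_sub hj']
  rw [← term_final s hodd h n j (n - j) (by omega) a b c d e f g l hg ga gl gae gaf gag gle glf glg]
  rw [← FT_sum s hodd h3 h (n - j) (fun i h1 h2 => hnz i h1 (by omega)) (a + 2 * j * h)
    (e + j * h) (f + j * h) (a - l) (g + j * h) (by rw [hnj]; linear_combination hg)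
    (ga.shift (2 * j) (by push_cast; ring)) (gae.shift j (by push_cast; ring))
    (gaf.shift j (by push_cast; ring)) (gl.shift (2 * j) (by push_cast; ring))
    (gag.shift j (by push_cast; ring)), Finset.mul_sum, Finset.mul_sum]
  apply Finset.sum_congr rfl
  intro i hi
  have hi' := Finset.mem_range.1 hi
  rw [YY_shift s hodd h n j i (by omega) hnz a e f g l ga gal]

lemma PP_ne_of_le (s : ℂ → ℂ) (h x : ℂ) {k n : ℕ} (hk : k ≤ n) (H : PP s h x n ≠ 0) :
    PP s h x k ≠ 0 := by
  obtain ⟨m, rfl⟩ := Nat.exists_eq_add_of_le hk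
  rw [PP_add] at H
  exact left_ne_zero_of_mul H

lemma PP_cont (s : ℂ → ℂ) (hs : Continuous s) (h : ℂ) (n : ℕ) : Continuous fun x => PP s h x n := by
  unfold PP
  fun_prop

lemma bad_countable (s : ℂ → ℂ) (ell : ℝ) (hz : ∀ y, s y = 0 → ∃ m : ℤ, y.re = m * ell) (h x : ℂ)
    (w : ℝ) (hw : w ≠ 0) : {t : ℝ | ¬ GG s h (x + t * w)}.Countable := by
  have : {t : ℝ | ¬ GG s h (x + t * w)} ⊆
      Set.range (fun im : ℤ × ℤ => (im.2 * ell - x.re - im.1 * h.re) / w) := by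
    intro t ht
    simp only [GG, Set.mem_setOf_eq, not_forall, not_not] at ht
    obtain ⟨i, hi⟩ := ht
    obtain ⟨m, hm⟩ := hz _ hi
    refine ⟨(i, m), ?_⟩
    simp at hm
    simp only
    rw [div_eq_iff hw, ← hm]
    ring
  exact (Set.countable_range _).mono this

lemma dense_eq (D : Set ℝ) (hD : D.Countable) (f g : ℝ → ℂ) (hf : ContinuousAt f 0)
    (hg : ContinuousAt g 0) (hfg : ∀ t, t ∉ D → f t = g t) : f 0 = g 0 := by
  have hd : Dense Dᶜ := hD.dense_compl ℝ
  have : (nhdsWithin (0 : ℝ) Dᶜ).NeBot := mem_closure_iff_nhdsWithin_neBot.1 (hd 0)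
  have h1 : Filter.Tendsto f (nhdsWithin 0 Dᶜ) (nhds (f 0)) := hf.tendsto.mono_left nhdsWithin_le_nhds
  have h2 : Filter.Tendsto g (nhdsWithin 0 Dᶜ) (nhds (g 0)) := hg.tendsto.mono_left nhdsWithin_le_nhds
  refine tendsto_nhds_unique h1 (h2.congr' ?_)
  filter_upwards [self_mem_nhdsWithin] with t ht
  exact (hfg t ht).symm

lemma WWt_cont (s : ℂ → ℂ) (hs : Continuous s) (h : ℂ) (n k : ℕ) (hk : k ≤ n)
    (a b c d e f g : ℝ → ℂ)
    (ca : Continuous a) (cb : Continuous b) (cc : Continuous c) (cd : Continuous d)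
    (ce : Continuous e) (cf : Continuous f) (cg : Continuous g)
    (H0 : s (a 0) ≠ 0) (H1 : PP s h h n ≠ 0) (H2 : PP s h (a 0 + h - b 0) n ≠ 0)
    (H3 : PP s h (a 0 + h - c 0) n ≠ 0) (H4 : PP s h (a 0 + h - d 0) n ≠ 0)
    (H5 : PP s h (a 0 + h - e 0) n ≠ 0) (H6 : PP s h (a 0 + h - f 0) n ≠ 0)
    (H7 : PP s h (a 0 + h - g 0) n ≠ 0) (H8 : PP s h (a 0 + h + n * h) n ≠ 0) :
    ContinuousAt (fun t => WWt s h n k (a t) (b t) (c t) (d t) (e t) (f t) (g t)) 0 := by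
  have P : ∀ u : ℝ → ℂ, Continuous u → Continuous fun t => PP s h (u t) k :=
    fun u hu => (PP_cont s hs h k).comp hu
  unfold WWt
  refine ContinuousAt.div (ContinuousAt.mul (ContinuousAt.div ?_ ?_ H0) ?_) ?_ ?_
  · exact (hs.comp (by fun_prop)).continuousAt
  · exact (hs.comp (by fun_prop)).continuousAt
  · have := P a ca
    have := P b cb
    have := P c cc
    have := P d cd
    have := P e ce
    have := P f cf
    have := P g cg
    exact Continuous.continuousAt (by fun_prop)
  · have := P (fun t => a t + h - b t) (by fun_prop)
    have := P (fun t => a t + h - c t) (by fun_prop)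
    have := P (fun t => a t + h - d t) (by fun_prop)
    have := P (fun t => a t + h - e t) (by fun_prop)
    have := P (fun t => a t + h - f t) (by fun_prop)
    have := P (fun t => a t + h - g t) (by fun_prop)
    have := P (fun t => a t + h + n * h) (by fun_prop)
    exact Continuous.continuousAt (by fun_prop)
  · have Q : ∀ x, PP s h x n ≠ 0 → PP s h x k ≠ 0 := fun x => PP_ne_of_le s h x hk
    simp only [ne_eq, mul_eq_zero, not_or]
    exact ⟨⟨⟨⟨⟨⟨⟨Q _ H1, Q _ H2⟩, Q _ H3⟩, Q _ H4⟩, Q _ H5⟩, Q _ H6⟩, Q _ H7⟩, Q _ H8⟩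

theorem Bailey_additive (s : ℂ → ℂ) (hodd : ∀ x, s (-x) = - s x) (h3 : ThreeTerm s)
    (hs : Continuous s) (ell : ℝ) (hz : ∀ y, s y = 0 → ∃ m : ℤ, y.re = m * ell)
    (h : ℂ) (n : ℕ) (a b c d e f g l : ℂ) (hl : l = 2 * a + h - b - c - d)
    (hg : e + f + g = a + l + (n + 1) * h)
    (H0 : s a ≠ 0) (H1 : PP s h h n ≠ 0) (H2 : PP s h (a + h - b) n ≠ 0)
    (H3 : PP s h (a + h - c) n ≠ 0) (H4 : PP s h (a + h - d) n ≠ 0)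
    (H5 : PP s h (a + h - e) n ≠ 0) (H6 : PP s h (a + h - f) n ≠ 0)
    (H7 : PP s h (a + h - g) n ≠ 0) (H8 : PP s h (a + h + n * h) n ≠ 0)
    (K0 : s l ≠ 0) (K5 : PP s h (l + h - e) n ≠ 0) (K6 : PP s h (l + h - f) n ≠ 0)
    (K7 : PP s h (l + h - g) n ≠ 0) (K8 : PP s h (l + h + n * h) n ≠ 0)
    (M1 : PP s h (l + h - e - f) n ≠ 0) (M2 : PP s h (l + h) n ≠ 0) :
    ∑ k ∈ Finset.range (n + 1), WWt s h n k a b c d e f g =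
      Pref s h n a e f l *
      ∑ k ∈ Finset.range (n + 1), WWt s h n k l (l + b - a) (l + c - a) (l + d - a) e f g := by
  have hnz : ∀ i : ℕ, 1 ≤ i → i ≤ n → s (i * h) ≠ 0 := by
    intro i h1 h2
    have := Finset.prod_ne_zero_iff.1 H1 (i - 1) (by simp; omega)
    rw [Nat.cast_sub h1] at this
    convert this using 2
    push_cast
    ring
  have key := dense_eq
    ({t : ℝ | ¬ GG s h (a + t * (1 : ℝ))} ∪ {t : ℝ | ¬ GG s h (l + t * (-7 : ℝ))} ∪
     {t : ℝ | ¬ GG s h (a - l + t * (8 : ℝ))} ∪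
     {t : ℝ | ¬ GG s h (a - b + t * (-2 : ℝ))} ∪ {t : ℝ | ¬ GG s h (a - c + t * (-2 : ℝ))} ∪
     {t : ℝ | ¬ GG s h (a - d + t * (-2 : ℝ))} ∪ {t : ℝ | ¬ GG s h (a - e + t * (-9 : ℝ))} ∪
     {t : ℝ | ¬ GG s h (a - f + t * (-99 : ℝ))} ∪ {t : ℝ | ¬ GG s h (a - g + t * (117 : ℝ))} ∪
     {t : ℝ | ¬ GG s h (l - e + t * (-17 : ℝ))} ∪ {t : ℝ | ¬ GG s h (l - f + t * (-107 : ℝ))} ∪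
     {t : ℝ | ¬ GG s h (l - g + t * (109 : ℝ))})
    (by
      repeat' apply Set.Countable.union
      all_goals exact bad_countable s ell hz h _ _ (by norm_num))
    (fun t => ∑ k ∈ Finset.range (n + 1), WWt s h n k (a + t) (b + 3 * t) (c + 3 * t) (d + 3 * t)
      (e + 10 * t) (f + 100 * t) (g - 116 * t))
    (fun t => Pref s h n (a + t) (e + 10 * t) (f + 100 * t) (l - 7 * t) *
      ∑ k ∈ Finset.range (n + 1), WWt s h n k (l - 7 * t) (l - 7 * t + (b + 3 * t) - (a + t))
        (l - 7 * t + (c + 3 * t) - (a + t)) (l - 7 * t + (d + 3 * t) - (a + t))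
      (e + 10 * t) (f + 100 * t) (g - 116 * t))
    (by
      refine tendsto_finsetSum _ fun k hk => ?_
      have hk' : k ≤ n := by have := Finset.mem_range.1 hk; omega
      apply WWt_cont s hs h n k hk' (fun t => a + t) (fun t => b + 3 * t) (fun t => c + 3 * t)
        (fun t => d + 3 * t) (fun t => e + 10 * t) (fun t => f + 100 * t) (fun t => g - 116 * t)
      iterate 7 fun_prop
      all_goals simpa using by assumption)
    (by
      apply ContinuousAt.mul
      · have P : ∀ u : ℝ → ℂ, Continuous u → Continuous fun t => PP s h (u t) n :=
          fun u hu => (PP_cont s hs h n).comp hu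
        unfold Pref
        apply ContinuousAt.div
        · have := P (fun t => a + t + h) (by fun_prop)
          have := P (fun t => a + t + h - (e + 10 * t) - (f + 100 * t)) (by fun_prop)
          have := P (fun t => l - 7 * t + h - (e + 10 * t)) (by fun_prop)
          have := P (fun t => l - 7 * t + h - (f + 100 * t)) (by fun_prop)
          exact Continuous.continuousAt (by fun_prop)
        · have := P (fun t => a + t + h - (e + 10 * t)) (by fun_prop)
          have := P (fun t => a + t + h - (f + 100 * t)) (by fun_prop)
          have := P (fun t => l - 7 * t + h - (e + 10 * t) - (f + 100 * t)) (by fun_prop)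
          have := P (fun t => l - 7 * t + h) (by fun_prop)
          exact Continuous.continuousAt (by fun_prop)
        · simpa using ⟨⟨⟨H5, H6⟩, M1⟩, M2⟩
      refine tendsto_finsetSum _ fun k hk => ?_
      have hk' : k ≤ n := by have := Finset.mem_range.1 hk; omega
      apply WWt_cont s hs h n k hk' (fun t => l - 7 * t) (fun t => l - 7 * t + (b + 3 * t) - (a + t))
        (fun t => l - 7 * t + (c + 3 * t) - (a + t))
        (fun t => l - 7 * t + (d + 3 * t) - (a + t)) (fun t => e + 10 * t) (fun t => f + 100 * t)
        (fun t => g - 116 * t)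
      iterate 7 fun_prop
      · simpa using K0
      · exact H1
      · convert H2 using 2; push_cast; ring
      · convert H3 using 2; push_cast; ring
      · convert H4 using 2; push_cast; ring
      all_goals simpa using by assumption)
    (by
      intro t ht
      simp only [Set.mem_union, Set.mem_setOf_eq, not_or, not_not] at ht
      obtain ⟨⟨⟨⟨⟨⟨⟨⟨⟨⟨⟨g1, g2⟩, g3⟩, g4⟩, g5⟩, g6⟩, g7⟩, g8⟩, g9⟩, g10⟩, g11⟩, g12⟩ := ht
      apply Bailey_generic s hodd h3 h n hnz
      · rw [hl]; ring
      · linear_combination hg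
      · exact g1.shift 0 (by push_cast; ring)
      · exact g2.shift 0 (by push_cast; ring)
      · exact g3.shift 0 (by push_cast; ring)
      · exact g4.shift 0 (by push_cast; ring)
      · exact g5.shift 0 (by push_cast; ring)
      · exact g6.shift 0 (by push_cast; ring)
      · exact g7.shift 0 (by push_cast; ring)
      · exact g8.shift 0 (by push_cast; ring)
      · exact g9.shift 0 (by push_cast; ring)
      · exact g10.shift 0 (by push_cast; ring)
      · exact g11.shift 0 (by push_cast; ring)
      · exact g12.shift 0 (by push_cast; ring))
  simpa using key

lemma hs_congr {ι : Type*} {f g : ι → ℂ} {a : ℂ} (h : ∀ k, f k = g k) (hg : HasSum g a) :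
    HasSum f a := by
  rw [funext h]
  exact hg

lemma summ_gauss (al : ℝ) (hal : al < 0) (be ga : ℂ) :
    Summable fun k : ℤ => Complex.exp (al * (k : ℂ) ^ 2 + be * k + ga) := by
  have hpi : (Real.pi : ℂ) ≠ 0 := by exact_mod_cast Real.pi_ne_zero
  have h1 := (summable_jacobiTheta₂_term_iff (be / (2 * Real.pi * Complex.I))
    (((-al / Real.pi : ℝ) : ℂ) * Complex.I)).2 (by
      simp
      exact div_pos (by linarith) Real.pi_pos)
  have h2 := h1.mul_right (Complex.exp ga)
  refine h2.congr fun k => ?_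
  rw [jacobiTheta₂_term, ← Complex.exp_add]
  congr 1
  push_cast
  field_simp
  linear_combination (-(k : ℂ) ^ 2 * al) * Complex.I_sq

/-- finite product `(p;p)_m` -/
def pq (p : ℝ) (m : ℕ) : ℝ := ∏ j ∈ Finset.range m, (1 - p ^ (j + 1))

/-- reciprocal of `(p;p)_m`, zero for negative `m` -/
noncomputable def rr (p : ℝ) (m : ℤ) : ℝ := if m < 0 then 0 else (pq p m.toNat)⁻¹

lemma pq_ne (p : ℝ) (hp0 : 0 < p) (hp1 : p < 1) (m : ℕ) : pq p m ≠ 0 := by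
  refine Finset.prod_ne_zero_iff.2 fun j _ => ?_
  have := pow_lt_one₀ hp0.le hp1 (Nat.succ_ne_zero j)
  exact (sub_pos.2 this).ne'

lemma rr_rec (p : ℝ) (hp0 : 0 < p) (hp1 : p < 1) (m : ℤ) : rr p (m - 1) = (1 - p ^ m) * rr p m := by
  rcases lt_trichotomy m 0 with h | h | h
  · simp [rr, h, show m - 1 < 0 by omega]
  · subst h; simp [rr]
  · obtain ⟨k, rfl⟩ : ∃ k : ℕ, m = k + 1 := ⟨(m - 1).toNat, by omega⟩
    have h1 : ¬ ((k : ℤ) + 1 < 0) := by omega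
    have h2 : ¬ ((k : ℤ) + 1 - 1 < 0) := by omega
    have h3 : ((k : ℤ) + 1).toNat = k + 1 := by omega
    have h4 : ((k : ℤ) + 1 - 1).toNat = k := by omega
    rw [rr, rr, if_neg h1, if_neg h2, h3, h4]
    have e : pq p (k + 1) = pq p k * (1 - p ^ (k + 1)) := by
      simp [pq, Finset.prod_range_succ]
    have n1 := pq_ne p hp0 hp1 k
    have n2 := pq_ne p hp0 hp1 (k + 1)
    rw [e] at n2 ⊢
    have n3 := right_ne_zero_of_mul n2
    have e2 : p ^ ((k : ℤ) + 1) = p ^ (k + 1) := by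
      exact_mod_cast zpow_natCast p (k + 1)
    rw [e2]
    field_simp

/-- Gaussian binomial `[2N; N+k]` -/
noncomputable def cc (p : ℝ) (N : ℕ) (k : ℤ) : ℝ := pq p (2 * N) * rr p (N + k) * rr p (N - k)

lemma cc_rec (p : ℝ) (hp0 : 0 < p) (hp1 : p < 1) (N : ℕ) (k : ℤ) :
    cc p (N + 1) k = (1 + p ^ (2 * N + 1)) * cc p N k + p ^ ((N : ℤ) - k + 1) * cc p N (k - 1) +
      p ^ ((N : ℤ) + k + 1) * cc p N (k + 1) := by
  have hp : p ≠ 0 := hp0.ne'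
  have r1 := rr_rec p hp0 hp1 (N + k + 1)
  have r2 := rr_rec p hp0 hp1 (N - k + 1)
  have r3 := rr_rec p hp0 hp1 (N + k)
  have r4 := rr_rec p hp0 hp1 (N - k)
  simp only [add_sub_cancel_right] at r1 r2
  unfold cc
  have e1 : ((N + 1 : ℕ) : ℤ) + k = N + k + 1 := by push_cast; ring
  have e2 : ((N + 1 : ℕ) : ℤ) - k = N - k + 1 := by push_cast; ring
  have e3 : (N : ℤ) + (k - 1) = N + k - 1 := by ring
  have e4 : (N : ℤ) - (k - 1) = N - k + 1 := by ring
  have e5 : (N : ℤ) + (k + 1) = N + k + 1 := by ring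
  have e6 : (N : ℤ) - (k + 1) = N - k - 1 := by ring
  have e7 : pq p (2 * (N + 1)) = pq p (2 * N) * (1 - p ^ (2 * N + 1)) * (1 - p ^ (2 * N + 2)) := by
    rw [show 2 * (N + 1) = 2 * N + 1 + 1 by ring, pq, Finset.prod_range_succ,
      Finset.prod_range_succ]
    rfl
  rw [e1, e2, e3, e4, e5, e6, e7, r3, r4, r1, r2]
  have f1 : p ^ ((N : ℤ) + k + 1) = p ^ ((N : ℤ) + k) * p := zpow_add_one₀ hp _
  have f2 : p ^ ((N : ℤ) - k + 1) = p ^ ((N : ℤ) - k) * p := zpow_add_one₀ hp _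
  have f3 : p ^ (2 * N) = p ^ ((N : ℤ) + k) * p ^ ((N : ℤ) - k) := by
    rw [← zpow_add₀ hp, ← zpow_natCast]
    congr 1
    push_cast
    ring
  have f4 : p ^ (2 * N + 1) = p ^ (2 * N) * p := pow_succ _ _
  have f5 : p ^ (2 * N + 2) = p ^ (2 * N) * p * p := by rw [pow_add]; ring
  rw [f4, f5, f3, f1, f2]
  ring

/-- theta series term -/
noncomputable def EE (p : ℝ) (x : ℂ) (k : ℤ) : ℂ :=
  Complex.exp (Real.log p * ((k : ℂ) * (k - 1) / 2) + k * (x + Real.pi * Complex.I))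

lemma exp_log_zpow (p : ℝ) (hp0 : 0 < p) (m : ℤ) :
    Complex.exp (Real.log p * m) = (p : ℂ) ^ m := by
  rw [mul_comm, Complex.exp_int_mul, ← Complex.ofReal_exp, Real.exp_log hp0]

lemma EE_succ (p : ℝ) (hp0 : 0 < p) (x : ℂ) (k : ℤ) :
    EE p x (k + 1) = - EE p x k * Complex.exp x * (p : ℂ) ^ k := by
  rw [← exp_log_zpow p hp0, EE, EE]
  have : - Complex.exp (Real.log p * ((k : ℂ) * (k - 1) / 2) + k * (x + Real.pi * Complex.I)) =
      Complex.exp (Real.log p * ((k : ℂ) * (k - 1) / 2) + k * (x + Real.pi * Complex.I)) *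
      Complex.exp (Real.pi * Complex.I) := by rw [Complex.exp_pi_mul_I]; ring
  rw [this, ← Complex.exp_add, ← Complex.exp_add, ← Complex.exp_add]
  congr 1
  push_cast
  ring

lemma finite_triple (p : ℝ) (hp0 : 0 < p) (hp1 : p < 1) (x : ℂ) (N : ℕ) :
    HasSum (fun k : ℤ => EE p x k * (cc p N k : ℂ))
      (∏ j ∈ Finset.range N, ((1 - Complex.exp x * (p : ℂ) ^ j) *
        (1 - (p : ℂ) ^ (j + 1) / Complex.exp x))) := by
  have hp : (p : ℂ) ≠ 0 := by exact_mod_cast hp0.ne'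
  have hx : Complex.exp x ≠ 0 := Complex.exp_ne_zero x
  induction N with
  | zero =>
    have h0 : (1 : ℂ) = EE p x 0 * (cc p 0 0 : ℂ) := by simp [EE, cc, rr, pq]
    rw [Finset.prod_range_zero, h0]
    apply hasSum_single
    intro k hk
    have : cc p 0 k = 0 := by
      rcases lt_or_gt_of_ne hk with h | h
      · simp [cc, rr, h]
      · simp [cc, rr, h]
    simp [this]
  | succ N ih =>
    rw [Finset.prod_range_succ]
    have i1 := (Equiv.subRight (1 : ℤ)).hasSum_iff.2 ih
    have i2 := (Equiv.addRight (1 : ℤ)).hasSum_iff.2 ih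
    have i3 := ((ih.mul_right (1 + (p : ℂ) ^ (2 * N + 1))).sub
      (i1.mul_right (Complex.exp x * (p : ℂ) ^ N))).sub
      (i2.mul_right ((p : ℂ) ^ (N + 1) / Complex.exp x))
    have hv : ∀ P : ℂ, P * ((1 - Complex.exp x * (p : ℂ) ^ N) *
        (1 - (p : ℂ) ^ (N + 1) / Complex.exp x)) = P * (1 + (p : ℂ) ^ (2 * N + 1)) -
        P * (Complex.exp x * (p : ℂ) ^ N) - P * ((p : ℂ) ^ (N + 1) / Complex.exp x) := by
      intro P
      field_simp
      ring
    rw [hv]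
    refine hs_congr (fun k => ?_) i3
    · simp only [Function.comp, Equiv.subRight_apply, Equiv.coe_addRight]
      rw [cc_rec p hp0 hp1, EE_succ p hp0 x k]
      have := EE_succ p hp0 x (k - 1)
      rw [sub_add_cancel] at this
      have e1 : EE p x (k - 1) * Complex.exp x = - EE p x k * (p : ℂ) ^ (1 - k) := by
        rw [this, show 1 - k = -(k - 1) by ring, zpow_neg]
        have := zpow_ne_zero (k - 1) hp
        field_simp
      have e2 : (p : ℂ) ^ ((N : ℤ) - k + 1) = (p : ℂ) ^ N * (p : ℂ) ^ (1 - k) := by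
        rw [← zpow_natCast, ← zpow_add₀ hp]
        congr 1
        ring
      have e3 : (p : ℂ) ^ ((N : ℤ) + k + 1) = (p : ℂ) ^ (N + 1) * (p : ℂ) ^ k := by
        rw [← zpow_natCast, ← zpow_add₀ hp]
        congr 1
        push_cast
        ring
      have e4 : - EE p x k * Complex.exp x * (p : ℂ) ^ k * ((cc p N (k + 1) : ℝ) : ℂ) *
          ((p : ℂ) ^ (N + 1) / Complex.exp x) =
          - EE p x k * (p : ℂ) ^ k * ((cc p N (k + 1) : ℝ) : ℂ) * (p : ℂ) ^ (N + 1) := by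
        field_simp
      rw [e4]
      push_cast
      rw [e2, e3]
      linear_combination (((cc p N (k - 1) : ℝ) : ℂ) * (p : ℂ) ^ N) * e1

/-- `(p;p)_∞` -/
noncomputable def LL (p : ℝ) : ℝ := ∏' j : ℕ, (1 - p ^ (j + 1))

lemma summ_pow (p : ℝ) (hp0 : 0 < p) (hp1 : p < 1) : Summable fun j : ℕ => p ^ (j + 1) := by
  simp only [pow_succ]
  exact (summable_geometric_of_lt_one hp0.le hp1).mul_right p

lemma LL_tendsto (p : ℝ) (hp0 : 0 < p) (hp1 : p < 1) :
    Filter.Tendsto (pq p) Filter.atTop (nhds (LL p)) := by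
  have : Multipliable fun j : ℕ => (1 + -p ^ (j + 1)) := by
    apply multipliable_one_add_of_summable
    simpa using (summ_pow p hp0 hp1).abs
  have := this.hasProd.tendsto_prod_nat
  simp only [← sub_eq_add_neg] at this
  exact this

lemma LL_ne (p : ℝ) (hp0 : 0 < p) (hp1 : p < 1) : LL p ≠ 0 := by
  have := tprod_one_add_ne_zero_of_summable (f := fun j : ℕ => -p ^ (j + 1)) (fun j => by
    have := pow_lt_one₀ hp0.le hp1 (Nat.succ_ne_zero j)
    rw [← sub_eq_add_neg]
    exact (sub_pos.2 this).ne') (by simpa using (summ_pow p hp0 hp1).abs)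
  simp only [← sub_eq_add_neg] at this
  exact this

lemma rr_tendsto (p : ℝ) (hp0 : 0 < p) (hp1 : p < 1) :
    Filter.Tendsto (rr p) Filter.atTop (nhds (LL p)⁻¹) := by
  have h1 := (LL_tendsto p hp0 hp1).inv₀ (LL_ne p hp0 hp1)
  have h2 : Filter.Tendsto Int.toNat Filter.atTop Filter.atTop := by
    refine Filter.tendsto_atTop.2 fun b => ?_
    filter_upwards [Filter.eventually_ge_atTop (b : ℤ)] with a ha
    omega
  refine (h1.comp h2).congr' ?_
  filter_upwards [Filter.eventually_ge_atTop (0 : ℤ)] with a ha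
  simp [rr, not_lt.2 ha]

lemma rr_bdd (p : ℝ) (hp0 : 0 < p) (hp1 : p < 1) : ∃ B, 0 ≤ B ∧ ∀ m, |rr p m| ≤ B := by
  have h1 := (LL_tendsto p hp0 hp1).inv₀ (LL_ne p hp0 hp1)
  obtain ⟨B, hB⟩ := (Metric.isBounded_range_of_tendsto _ h1).exists_norm_le
  have hB' : ∀ n : ℕ, |(pq p n)⁻¹| ≤ B := fun n => hB _ ⟨n, rfl⟩
  have B0 : 0 ≤ B := (abs_nonneg _).trans (hB' 0)
  refine ⟨B, B0, fun m => ?_⟩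
  unfold rr
  split_ifs
  · simpa using B0
  · exact hB' _

lemma cc_tendsto (p : ℝ) (hp0 : 0 < p) (hp1 : p < 1) (k : ℤ) :
    Filter.Tendsto (fun N => cc p N k) Filter.atTop (nhds (LL p)⁻¹) := by
  have h1 : Filter.Tendsto (fun N : ℕ => pq p (2 * N)) Filter.atTop (nhds (LL p)) :=
    (LL_tendsto p hp0 hp1).comp (Filter.tendsto_id.const_mul_atTop' (by norm_num))
  have h2 : Filter.Tendsto (fun N : ℕ => rr p ((N : ℤ) + k)) Filter.atTop (nhds (LL p)⁻¹) :=
    (rr_tendsto p hp0 hp1).comp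
      (Filter.tendsto_atTop_add_const_right _ _ tendsto_natCast_atTop_atTop)
  have h3 : Filter.Tendsto (fun N : ℕ => rr p ((N : ℤ) - k)) Filter.atTop (nhds (LL p)⁻¹) :=
    (rr_tendsto p hp0 hp1).comp
      (Filter.tendsto_atTop_add_const_right _ _ tendsto_natCast_atTop_atTop)
  have := (h1.mul h2).mul h3
  rwa [mul_inv_cancel₀ (LL_ne p hp0 hp1), one_mul] at this

lemma cc_bdd (p : ℝ) (hp0 : 0 < p) (hp1 : p < 1) : ∃ B, ∀ N k, |cc p N k| ≤ B := by
  obtain ⟨B, B0, hB⟩ := rr_bdd p hp0 hp1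
  obtain ⟨C, hC⟩ := (Metric.isBounded_range_of_tendsto _ (LL_tendsto p hp0 hp1)).exists_norm_le
  have hC' : ∀ n : ℕ, |pq p n| ≤ C := fun n => hC _ ⟨n, rfl⟩
  have C0 : 0 ≤ C := (abs_nonneg _).trans (hC' 0)
  refine ⟨C * B * B, fun N k => ?_⟩
  rw [cc, abs_mul, abs_mul]
  gcongr
  · exact hC' _
  · exact hB _
  · exact hB _

lemma EE_summable (p : ℝ) (hp0 : 0 < p) (hp1 : p < 1) (x : ℂ) : Summable (EE p x) := by
  have := summ_gauss (Real.log p / 2) (by linarith [Real.log_neg hp0 hp1])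
    (x + Real.pi * Complex.I - Real.log p / 2) 0
  refine this.congr fun k => ?_
  rw [EE]
  congr 1
  push_cast
  ring

lemma theta_multipliable (p : ℝ) (hp0 : 0 < p) (hp1 : p < 1) (z : ℂ) :
    Summable fun j : ℕ => ‖(1 - z * (p : ℂ) ^ j) * (1 - (p : ℂ) ^ (j + 1) / z) - 1‖ := by
  have hg : Summable fun j : ℕ => (p : ℂ) ^ j := by
    apply summable_geometric_of_norm_lt_one
    simpa [abs_of_pos hp0] using hp1
  have hg2 : Summable fun j : ℕ => ((p : ℂ) ^ 2) ^ j := by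
    apply summable_geometric_of_norm_lt_one
    have : |p| ^ 2 < 1 := by rw [abs_of_pos hp0]; nlinarith
    simpa using this
  have := ((hg.mul_left (-z)).sub (hg.mul_left (p / z))).add (hg2.mul_left (z * (p / z)))
  refine (this.congr fun j => ?_).norm
  have e : ((p : ℂ) ^ 2) ^ j = (p : ℂ) ^ j * (p : ℂ) ^ j := by ring
  rw [e, pow_succ (p : ℂ) j]
  ring

theorem triple_product (p : ℝ) (hp0 : 0 < p) (hp1 : p < 1) (x : ℂ) :
    theta p (Complex.exp x) = (LL p : ℂ)⁻¹ * ∑' k : ℤ, EE p x k := by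
  have h1 : Filter.Tendsto (fun N : ℕ => ∏ j ∈ Finset.range N, ((1 - Complex.exp x * (p : ℂ) ^ j) *
        (1 - (p : ℂ) ^ (j + 1) / Complex.exp x))) Filter.atTop (nhds (theta p (Complex.exp x))) := by
    have := multipliable_one_add_of_summable (theta_multipliable p hp0 hp1 (Complex.exp x))
    simp only [add_sub_cancel] at this
    exact this.hasProd.tendsto_prod_nat
  obtain ⟨B, hB⟩ := cc_bdd p hp0 hp1
  have h2 := tendsto_tsum_of_dominated_convergence (𝓕 := Filter.atTop)
    (f := fun (N : ℕ) (k : ℤ) => EE p x k * (cc p N k : ℂ))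
    (g := fun k => EE p x k * (((LL p)⁻¹ : ℝ) : ℂ)) (bound := fun k => ‖EE p x k‖ * B)
    ((EE_summable p hp0 hp1 x).norm.mul_right B)
    (fun k => ((Complex.continuous_ofReal.tendsto _).comp (cc_tendsto p hp0 hp1 k)).const_mul _)
    (Filter.Eventually.of_forall fun N k => by
      rw [norm_mul, Complex.norm_real]
      exact mul_le_mul_of_nonneg_left (hB N k) (norm_nonneg _))
  simp only [(finite_triple p hp0 hp1 x _).tsum_eq] at h2
  rw [tendsto_nhds_unique h1 h2, tsum_mul_right, mul_comm]
  push_cast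
  rfl

/-- odd theta -/
noncomputable def sth (p : ℝ) (x : ℂ) : ℂ := Complex.exp (-x / 2) * theta p (Complex.exp x)

/-- odd theta series term -/
noncomputable def Gt (p : ℝ) (x : ℂ) (k : ℤ) : ℂ :=
  Complex.exp (Real.log p * ((k : ℂ) * (k - 1) / 2) + k * (Real.pi * Complex.I) + (k - 1 / 2) * x)

lemma Gt_eq (p : ℝ) (x : ℂ) (k : ℤ) : Gt p x k = Complex.exp (-x / 2) * EE p x k := by
  rw [Gt, EE, ← Complex.exp_add]
  congr 1
  ring

lemma Gt_summable (p : ℝ) (hp0 : 0 < p) (hp1 : p < 1) (x : ℂ) : Summable (Gt p x) :=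
  ((EE_summable p hp0 hp1 x).mul_left _).congr fun k => (Gt_eq p x k).symm

lemma sth_eq (p : ℝ) (hp0 : 0 < p) (hp1 : p < 1) (x : ℂ) :
    sth p x = (LL p : ℂ)⁻¹ * ∑' k : ℤ, Gt p x k := by
  rw [sth, triple_product p hp0 hp1]
  simp only [Gt_eq]
  rw [tsum_mul_left]
  ring

lemma sth_odd (p : ℝ) (hp0 : 0 < p) (hp1 : p < 1) (x : ℂ) : sth p (-x) = - sth p x := by
  rw [sth_eq p hp0 hp1, sth_eq p hp0 hp1, ← (Equiv.subLeft (1 : ℤ)).tsum_eq, ← mul_neg, ← tsum_neg]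
  congr 2
  funext k
  have : Complex.exp (-(2 * Real.pi * Complex.I) * k) = 1 := by
    rw [mul_comm, ← Complex.exp_zero, Complex.exp_eq_exp_iff_exists_int]
    exact ⟨-k, by push_cast; ring⟩
  have e : -Gt p x k = Gt p x k * Complex.exp (-(2 * Real.pi * Complex.I) * k) *
    Complex.exp (Real.pi * Complex.I) := by rw [Complex.exp_pi_mul_I, this]; ring
  rw [e, Gt, Gt, ← Complex.exp_add, ← Complex.exp_add, Equiv.subLeft_apply]
  congr 1
  push_cast
  ring

/-- odd part -/
noncomputable def Aod (p : ℝ) (x : ℂ) (j : ℤ) : ℂ :=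
  Complex.exp (Real.log p * (2 * j + 1) ^ 2 / 4 + (2 * j + 1) * x)

/-- even part -/
noncomputable def Bev (p : ℝ) (x : ℂ) (j : ℤ) : ℂ :=
  Complex.exp (Real.log p * j ^ 2 + 2 * j * x)

lemma Aod_summable (p : ℝ) (hp0 : 0 < p) (hp1 : p < 1) (x : ℂ) : Summable (Aod p x) := by
  have := summ_gauss (Real.log p) (by linarith [Real.log_neg hp0 hp1])
    (2 * x + Real.log p) (Real.log p / 4 + x)
  refine this.congr fun k => ?_
  rw [Aod]
  congr 1
  ring

lemma Bev_summable (p : ℝ) (hp0 : 0 < p) (hp1 : p < 1) (x : ℂ) : Summable (Bev p x) := by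
  have := summ_gauss (Real.log p) (by linarith [Real.log_neg hp0 hp1]) (2 * x) 0
  refine this.congr fun k => ?_
  rw [Bev]
  congr 1
  ring

/-- parity splitting of pairs -/
def splitEquiv : (ℤ × ℤ) ⊕ (ℤ × ℤ) ≃ ℤ × ℤ where
  toFun := Sum.elim (fun u => (u.1 + 1 + u.2, u.1 + 1 - u.2)) (fun u => (u.1 + u.2 + 1, u.1 - u.2))
  invFun := fun v => if (v.1 + v.2) % 2 = 0 then Sum.inl ((v.1 + v.2) / 2 - 1, (v.1 - v.2) / 2)
    else Sum.inr ((v.1 + v.2 - 1) / 2, (v.1 - v.2 - 1) / 2)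
  left_inv := by
    rintro (⟨j, i⟩ | ⟨j, i⟩)
    · have : (j + 1 + i + (j + 1 - i)) % 2 = 0 := by omega
      simp only [Sum.elim_inl, this, if_true]
      congr 2 <;> omega
    · have : ¬ (j + i + 1 + (j - i)) % 2 = 0 := by omega
      simp only [Sum.elim_inr, this, if_false]
      congr 2 <;> omega
  right_inv := by
    rintro ⟨k, l⟩
    by_cases h : (k + l) % 2 = 0
    · simp only [h, if_true, Sum.elim_inl]
      ext <;> simp <;> omega
    · simp only [h, if_false, Sum.elim_inr]
      ext <;> simp <;> omega

lemma exp_two_pi (m : ℤ) : Complex.exp (2 * m * (Real.pi * Complex.I)) = 1 := by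
  rw [← Complex.exp_zero, Complex.exp_eq_exp_iff_exists_int]
  exact ⟨m, by ring⟩

lemma sth_prod (p : ℝ) (hp0 : 0 < p) (hp1 : p < 1) : ∃ (K : ℂ) (A B : ℂ → ℂ), ∀ x y,
    sth p (x + y) * sth p (x - y) = K * (A x * B y - B x * A y) := by
  refine ⟨(LL p : ℂ)⁻¹ ^ 2 * Complex.exp (-Real.log p / 4), fun x => ∑' j, Aod p x j,
    fun x => ∑' j, Bev p x j, fun x y => ?_⟩
  have hG := fun x => (Gt_summable p hp0 hp1 x).norm
  have hA := fun x => (Aod_summable p hp0 hp1 x).norm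
  have hB := fun x => (Bev_summable p hp0 hp1 x).norm
  have h1 := tsum_mul_tsum_of_summable_norm (hG (x + y)) (hG (x - y))
  have s1 := summable_mul_of_summable_norm (hG (x + y)) (hG (x - y))
  have s2 := splitEquiv.summable_iff.2 s1
  have h2 := tsum_mul_tsum_of_summable_norm (hA x) (hB y)
  have h3 := tsum_mul_tsum_of_summable_norm (hB x) (hA y)
  have s3 := summable_mul_of_summable_norm (hA x) (hB y)
  have s4 := summable_mul_of_summable_norm (hB x) (hA y)
  have t1 : ∀ u : ℤ × ℤ, Gt p (x + y) (u.1 + 1 + u.2) * Gt p (x - y) (u.1 + 1 - u.2) =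
      Complex.exp (-Real.log p / 4) * (Aod p x u.1 * Bev p y u.2) := by
    rintro ⟨j, i⟩
    rw [← mul_one (Complex.exp (-Real.log p / 4) * _), ← exp_two_pi (j + 1)]
    simp only [Gt, Aod, Bev, ← Complex.exp_add]
    congr 1
    push_cast
    ring
  have t2 : ∀ u : ℤ × ℤ, Gt p (x + y) (u.1 + u.2 + 1) * Gt p (x - y) (u.1 - u.2) =
      (-Complex.exp (-Real.log p / 4)) * (Bev p x u.1 * Aod p y u.2) := by
    rintro ⟨j, i⟩
    have : -Complex.exp (-Real.log p / 4) = Complex.exp (-Real.log p / 4) *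
      Complex.exp (Real.pi * Complex.I) := by rw [Complex.exp_pi_mul_I]; ring
    rw [this, ← mul_one (Complex.exp (-Real.log p / 4) * _ * _), ← exp_two_pi j]
    simp only [Gt, Aod, Bev, ← Complex.exp_add]
    congr 1
    push_cast
    ring
  have h4 : HasSum (fun u : (ℤ × ℤ) ⊕ (ℤ × ℤ) =>
      Gt p (x + y) (splitEquiv u).1 * Gt p (x - y) (splitEquiv u).2)
      (Complex.exp (-Real.log p / 4) * ∑' u : ℤ × ℤ, Aod p x u.1 * Bev p y u.2 +
       (-Complex.exp (-Real.log p / 4)) * ∑' u : ℤ × ℤ, Bev p x u.1 * Aod p y u.2) := by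
    apply HasSum.sum
    · exact hs_congr (fun u => t1 u) (s3.hasSum.mul_left _)
    · exact hs_congr (fun u => t2 u) (s4.hasSum.mul_left _)
  have h5 := (splitEquiv.hasSum_iff (f := fun z : ℤ × ℤ => Gt p (x + y) z.1 * Gt p (x - y) z.2)).1 h4
  rw [sth_eq p hp0 hp1, sth_eq p hp0 hp1]
  simp only []
  calc _ = (LL p : ℂ)⁻¹ ^ 2 * ((∑' k, Gt p (x + y) k) * ∑' k, Gt p (x - y) k) := by ring
    _ = _ := by
      rw [h1, h5.tsum_eq, ← h2, ← h3]
      ring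

lemma sth_three (p : ℝ) (hp0 : 0 < p) (hp1 : p < 1) : ThreeTerm (sth p) := by
  obtain ⟨K, A, B, h⟩ := sth_prod p hp0 hp1
  intro x y u v
  have e1 := h x y
  have e2 := h u v
  have e3 := h x v
  have e4 := h u y
  have e5 := h x u
  have e6 := h y v
  calc _ = (sth p (x + y) * sth p (x - y)) * (sth p (u + v) * sth p (u - v)) -
      (sth p (x + v) * sth p (x - v)) * (sth p (u + y) * sth p (u - y)) := by ring
    _ = (sth p (x + u) * sth p (x - u)) * (sth p (y + v) * sth p (y - v)) := by
      rw [e1, e2, e3, e4, e5, e6]; ring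
    _ = _ := by ring

lemma sth_cont (p : ℝ) (hp0 : 0 < p) (hp1 : p < 1) : Continuous (sth p) := by
  have hpi : (Real.pi : ℂ) ≠ 0 := by exact_mod_cast Real.pi_ne_zero
  have e : sth p = fun x => Complex.exp (-x / 2) * ((LL p : ℂ)⁻¹ *
      jacobiTheta₂ ((x + Real.pi * Complex.I - Real.log p / 2) / (2 * Real.pi * Complex.I))
       (((-(Real.log p / 2) / Real.pi : ℝ) : ℂ) * Complex.I)) := by
    funext x
    rw [sth, triple_product p hp0 hp1, jacobiTheta₂]
    congr 3
    funext k
    rw [EE, jacobiTheta₂_term]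
    congr 1
    push_cast
    field_simp
    linear_combination ((k : ℂ) ^ 2 * Real.log p) * Complex.I_sq
  rw [e]
  have him : 0 < ((((-(Real.log p / 2) / Real.pi : ℝ) : ℂ) * Complex.I)).im := by
    have := Real.log_neg hp0 hp1
    simp only [Complex.im_ofReal_mul, Complex.I_im, mul_one]
    exact div_pos (by linarith) Real.pi_pos
  have hd : Continuous fun z => jacobiTheta₂ z (((-(Real.log p / 2) / Real.pi : ℝ) : ℂ) * Complex.I) :=
    continuous_iff_continuousAt.2 fun z => (differentiableAt_jacobiTheta₂_fst z him).continuousAt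
  have := hd.comp (g := fun z => jacobiTheta₂ z (((-(Real.log p / 2) / Real.pi : ℝ) : ℂ) * Complex.I))
    (f := fun x => (x + Real.pi * Complex.I - Real.log p / 2) / (2 * Real.pi * Complex.I))
    (by fun_prop)
  simp only [Function.comp_def] at this
  fun_prop

lemma sth_zero (p : ℝ) (hp0 : 0 < p) (hp1 : p < 1) (y : ℂ) (hy : sth p y = 0) :
    ∃ m : ℤ, y.re = m * Real.log p := by
  by_contra hcon
  push Not at hcon
  refine absurd hy (mul_ne_zero (Complex.exp_ne_zero _) ?_)
  have hz := Complex.exp_ne_zero y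
  have key : ∀ m : ℤ, Complex.exp y ≠ (p : ℂ) ^ m := by
    intro m hm
    apply hcon m
    rw [← exp_log_zpow p hp0] at hm
    have := congrArg norm hm
    rw [Complex.norm_exp, Complex.norm_exp] at this
    have := Real.exp_injective this
    rw [this]
    simp [mul_comm]
  have := tprod_one_add_ne_zero_of_summable
    (f := fun j : ℕ => (1 - Complex.exp y * (p : ℂ) ^ j) * (1 - (p : ℂ) ^ (j + 1) / Complex.exp y) - 1)
    (fun j => by
      have hp : (p : ℂ) ≠ 0 := by exact_mod_cast hp0.ne'
      simp only [add_sub_cancel]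
      apply mul_ne_zero
      · intro h
        apply key (-j)
        rw [zpow_neg, zpow_natCast]
        exact eq_inv_of_mul_eq_one_left (sub_eq_zero.1 h).symm
      · intro h
        apply key (j + 1)
        have := (sub_eq_zero.1 h).symm
        rw [div_eq_one_iff_eq hz] at this
        rw [← this]
        exact_mod_cast (zpow_natCast (p : ℂ) (j + 1)).symm)
    (theta_multipliable p hp0 hp1 _)
  simp only [add_sub_cancel] at this
  exact this

lemma theta_exp (p : ℝ) (x : ℂ) : theta p (Complex.exp x) = Complex.exp (x / 2) * sth p x := by
  rw [sth, ← mul_assoc, ← Complex.exp_add]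
  simp [neg_div]

/-- step -/
def hh (q : ℝ) : ℂ := 2 * (Real.log q : ℂ)

lemma qp_eq (q : ℝ) (l : ℂ) : qp q l = Complex.exp (l / 2 * hh q) := by
  rw [qp, hh]
  congr 1
  ring

/-- exponent -/
def xx (h x : ℂ) (k : ℕ) : ℂ := (k * x + h * (k * (k - 1) / 2)) / 2

lemma epoch_exp (p q : ℝ) (x : ℂ) (k : ℕ) :
    epoch p q (Complex.exp x) k = Complex.exp (xx (hh q) x k) * PP (sth p) (hh q) x k := by
  induction k with
  | zero => simp [epoch, PP, xx]
  | succ k ih =>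
    have e1 : epoch p q (Complex.exp x) (k + 1) = epoch p q (Complex.exp x) k *
        theta p (Complex.exp x * qp q (2 * (k : ℂ))) := by
      rw [epoch, Finset.prod_range_succ]; rfl
    have e2 : PP (sth p) (hh q) x (k + 1) = PP (sth p) (hh q) x k * sth p (x + k * hh q) := by
      rw [PP, Finset.prod_range_succ]; rfl
    have e3 : Complex.exp (xx (hh q) x (k + 1)) =
        Complex.exp (xx (hh q) x k) * Complex.exp ((x + k * hh q) / 2) := by
      rw [← Complex.exp_add]
      congr 1
      simp only [xx]
      push_cast
      ring
    have e4 : Complex.exp x * qp q (2 * (k : ℂ)) = Complex.exp (x + k * hh q) := by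
      rw [qp_eq, ← Complex.exp_add]
      congr 1
      ring
    rw [e1, e2, e3, e4, ih, theta_exp]
    ring

lemma epoch_ne (p q : ℝ) (x y : ℂ) (k : ℕ) (hy : y = Complex.exp x) (h : epoch p q y k ≠ 0) :
    PP (sth p) (hh q) x k ≠ 0 := by
  rw [hy, epoch_exp] at h
  exact right_ne_zero_of_mul h

lemma theta_ne (p : ℝ) (x : ℂ) (h : theta p (Complex.exp x) ≠ 0) : sth p x ≠ 0 := by
  rw [theta_exp] at h
  exact right_ne_zero_of_mul h

lemma exps_cancel (v1 v0 w u1 u2 u3 u4 u5 u6 u7 u8 t1 t2 t3 t4 t5 t6 t7 t8 S1 S0 P1 P2 P3 P4 P5 P6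
    P7 P8 Q1 Q2 Q3 Q4 Q5 Q6 Q7 Q8 : ℂ)
    (H : v1 - v0 + (u1 + u2 + u3 + u4 + u5 + u6 + u7 + u8 + w) -
      (t1 + t2 + t3 + t4 + t5 + t6 + t7 + t8) = 0) :
    (Complex.exp v1 * S1) / (Complex.exp v0 * S0) *
      ((Complex.exp u1 * P1) * (Complex.exp u2 * P2) * (Complex.exp u3 * P3) *
        (Complex.exp u4 * P4) * (Complex.exp u5 * P5) * (Complex.exp u6 * P6) *
        (Complex.exp u7 * P7) * (Complex.exp u8 * P8) * Complex.exp w) /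
      ((Complex.exp t1 * Q1) * (Complex.exp t2 * Q2) * (Complex.exp t3 * Q3) *
        (Complex.exp t4 * Q4) * (Complex.exp t5 * Q5) * (Complex.exp t6 * Q6) *
        (Complex.exp t7 * Q7) * (Complex.exp t8 * Q8)) =
    S1 / S0 * (P1 * P2 * P3 * P4 * P5 * P6 * P7 * P8) / (Q1 * Q2 * Q3 * Q4 * Q5 * Q6 * Q7 * Q8) := by
  calc _ = Complex.exp (v1 - v0 + (u1 + u2 + u3 + u4 + u5 + u6 + u7 + u8 + w) -
      (t1 + t2 + t3 + t4 + t5 + t6 + t7 + t8)) * (S1 / S0 * (P1 * P2 * P3 * P4 * P5 * P6 * P7 * P8) /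
      (Q1 * Q2 * Q3 * Q4 * Q5 * Q6 * Q7 * Q8)) := by
        simp only [Complex.exp_add, Complex.exp_sub, div_eq_mul_inv, mul_inv]
        ring
    _ = _ := by rw [H, Complex.exp_zero, one_mul]

lemma exps_cancel4 (u1 u2 u3 u4 t1 t2 t3 t4 P1 P2 P3 P4 Q1 Q2 Q3 Q4 : ℂ)
    (H : (u1 + u2 + u3 + u4) - (t1 + t2 + t3 + t4) = 0) :
    ((Complex.exp u1 * P1) * (Complex.exp u2 * P2) * (Complex.exp u3 * P3) *
        (Complex.exp u4 * P4)) /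
      ((Complex.exp t1 * Q1) * (Complex.exp t2 * Q2) * (Complex.exp t3 * Q3) *
        (Complex.exp t4 * Q4)) =
    (P1 * P2 * P3 * P4) / (Q1 * Q2 * Q3 * Q4) := by
  calc _ = Complex.exp ((u1 + u2 + u3 + u4) - (t1 + t2 + t3 + t4)) *
      ((P1 * P2 * P3 * P4) / (Q1 * Q2 * Q3 * Q4)) := by
        simp only [Complex.exp_add, Complex.exp_sub, div_eq_mul_inv, mul_inv]
        ring
    _ = _ := by rw [H, Complex.exp_zero, one_mul]

lemma mulq_div (q : ℝ) (a b : ℂ) :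
    Complex.exp a * qp q 2 / Complex.exp b = Complex.exp (a + hh q - b) := by
  rw [qp_eq, Complex.exp_sub, Complex.exp_add]
  norm_num

lemma mulq (q : ℝ) (a : ℂ) : Complex.exp a * qp q 2 = Complex.exp (a + hh q) := by
  rw [qp_eq, Complex.exp_add]
  norm_num

lemma q_two (q : ℝ) : qp q 2 = Complex.exp (hh q) := by
  rw [qp_eq]
  norm_num

lemma q_last (q : ℝ) (n : ℕ) : qp q (-2 * (n : ℂ)) = Complex.exp (-n * hh q) := by
  rw [qp_eq]
  congr 1
  ring

lemma tenW9_exp (p q : ℝ) (n : ℕ) (a b c d e f g : ℂ)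
    (hbal : b + c + d + e + f + g = 3 * a + (n + 2) * hh q) :
    tenW9 p q n (Complex.exp a) (Complex.exp b) (Complex.exp c) (Complex.exp d) (Complex.exp e)
      (Complex.exp f) (Complex.exp g) (qp q (-2 * (n : ℂ))) =
    ∑ k ∈ Finset.range (n + 1), WWt (sth p) (hh q) n k a b c d e f g := by
  unfold tenW9
  refine Finset.sum_congr rfl fun k _ => ?_
  have e0 : Complex.exp a * qp q (4 * (k : ℂ)) = Complex.exp (a + 2 * k * hh q) := by
    rw [qp_eq, ← Complex.exp_add]
    congr 1
    ring
  have e1 : qp q (2 * (k : ℂ)) = Complex.exp (k * hh q) := by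
    rw [qp_eq]
    congr 1
    ring
  have e2 : a + hh q - -n * hh q = a + hh q + n * hh q := by ring
  rw [e0, e1, q_last]
  simp only [mulq_div]
  rw [e2, q_two]
  simp only [epoch_exp, theta_exp]
  rw [exps_cancel]
  · rfl
  · simp only [xx]
    linear_combination (k : ℂ) * hbal

lemma pref_exp (p q : ℝ) (n : ℕ) (a e f l : ℂ) :
    epoch p q (Complex.exp a * qp q 2) n *
      epoch p q (Complex.exp a * qp q 2 / (Complex.exp e * Complex.exp f)) n *
      epoch p q (Complex.exp l * qp q 2 / Complex.exp e) n *
      epoch p q (Complex.exp l * qp q 2 / Complex.exp f) n /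
    (epoch p q (Complex.exp a * qp q 2 / Complex.exp e) n *
      epoch p q (Complex.exp a * qp q 2 / Complex.exp f) n *
      epoch p q (Complex.exp l * qp q 2 / (Complex.exp e * Complex.exp f)) n *
      epoch p q (Complex.exp l * qp q 2) n) = Pref (sth p) (hh q) n a e f l := by
  simp only [← Complex.exp_add, mulq, ← Complex.exp_sub, epoch_exp]
  rw [exps_cancel4]
  · simp only [Pref, sub_sub]
  · simp only [xx]
    ring

lemma Bailey_exp (p q : ℝ) (hp0 : 0 < p) (hp1 : p < 1)
    (n : ℕ) (a b c d e f g l : ℂ)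
    (hbal : b + c + d + e + f + g = 3 * a + (n + 2) * hh q) (hl : l = 2 * a + hh q - b - c - d)
    (hden1 : tenW9Den p q n (Complex.exp a) (Complex.exp b) (Complex.exp c) (Complex.exp d)
      (Complex.exp e) (Complex.exp f) (Complex.exp g) (qp q (-2 * (n : ℂ))) ≠ 0)
    (hden2 : tenW9Den p q n (Complex.exp l) (Complex.exp l * Complex.exp b / Complex.exp a)
      (Complex.exp l * Complex.exp c / Complex.exp a) (Complex.exp l * Complex.exp d / Complex.exp a)
      (Complex.exp e) (Complex.exp f) (Complex.exp g) (qp q (-2 * (n : ℂ))) ≠ 0)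
    (hden3 : epoch p q (Complex.exp a * qp q 2 / Complex.exp e) n *
      epoch p q (Complex.exp a * qp q 2 / Complex.exp f) n *
      epoch p q (Complex.exp l * qp q 2 / (Complex.exp e * Complex.exp f)) n *
      epoch p q (Complex.exp l * qp q 2) n ≠ 0) :
    tenW9 p q n (Complex.exp a) (Complex.exp b) (Complex.exp c) (Complex.exp d)
      (Complex.exp e) (Complex.exp f) (Complex.exp g) (qp q (-2 * (n : ℂ))) =
    epoch p q (Complex.exp a * qp q 2) n *
      epoch p q (Complex.exp a * qp q 2 / (Complex.exp e * Complex.exp f)) n *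
      epoch p q (Complex.exp l * qp q 2 / Complex.exp e) n *
      epoch p q (Complex.exp l * qp q 2 / Complex.exp f) n /
    (epoch p q (Complex.exp a * qp q 2 / Complex.exp e) n *
      epoch p q (Complex.exp a * qp q 2 / Complex.exp f) n *
      epoch p q (Complex.exp l * qp q 2 / (Complex.exp e * Complex.exp f)) n *
      epoch p q (Complex.exp l * qp q 2) n) *
    tenW9 p q n (Complex.exp l) (Complex.exp l * Complex.exp b / Complex.exp a)
      (Complex.exp l * Complex.exp c / Complex.exp a) (Complex.exp l * Complex.exp d / Complex.exp a)
      (Complex.exp e) (Complex.exp f) (Complex.exp g) (qp q (-2 * (n : ℂ))) := by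
  rw [pref_exp]
  have e1 : ∀ x, Complex.exp l * Complex.exp x / Complex.exp a = Complex.exp (l + x - a) := by
    intro x
    rw [Complex.exp_sub, Complex.exp_add]
  simp only [e1] at hden2 ⊢
  rw [tenW9_exp p q n a b c d e f g hbal, tenW9_exp p q n l _ _ _ _ _ _
    (by rw [hl]; linear_combination hbal)]
  simp only [tenW9Den, mul_ne_zero_iff] at hden1 hden2 hden3
  obtain ⟨⟨⟨⟨⟨⟨⟨⟨A0, A1⟩, A2⟩, A3⟩, A4⟩, A5⟩, A6⟩, A7⟩, A8⟩ := hden1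
  obtain ⟨⟨⟨⟨⟨⟨⟨⟨B0, B1⟩, B2⟩, B3⟩, B4⟩, B5⟩, B6⟩, B7⟩, B8⟩ := hden2
  obtain ⟨⟨⟨C1, C2⟩, C3⟩, C4⟩ := hden3
  apply Bailey_additive (sth p) (sth_odd p hp0 hp1) (sth_three p hp0 hp1) (sth_cont p hp0 hp1)
    (Real.log p) (sth_zero p hp0 hp1) (hh q) n a b c d e f g l hl
    (by rw [hl]; linear_combination hbal)
  · exact theta_ne p a A0
  · exact epoch_ne p q _ _ n (q_two q) A1
  · exact epoch_ne p q _ _ n (mulq_div q _ _) A2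
  · exact epoch_ne p q _ _ n (mulq_div q _ _) A3
  · exact epoch_ne p q _ _ n (mulq_div q _ _) A4
  · exact epoch_ne p q _ _ n (mulq_div q _ _) A5
  · exact epoch_ne p q _ _ n (mulq_div q _ _) A6
  · exact epoch_ne p q _ _ n (mulq_div q _ _) A7
  · refine epoch_ne p q _ _ n ?_ A8
    rw [q_last, mulq_div]
    congr 1
    ring
  · exact theta_ne p l B0
  · exact epoch_ne p q _ _ n (mulq_div q _ _) B5
  · exact epoch_ne p q _ _ n (mulq_div q _ _) B6
  · exact epoch_ne p q _ _ n (mulq_div q _ _) B7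
  · refine epoch_ne p q _ _ n ?_ B8
    rw [q_last, mulq_div]
    congr 1
    ring
  · refine epoch_ne p q _ _ n ?_ C3
    rw [← Complex.exp_add, mulq_div]
    congr 1
    ring
  · exact epoch_ne p q _ _ n (mulq q _) C4

/-- Frenkel–Turaev's elliptic analogue of Bailey's transformation formula for
terminating balanced very-well-poised `₁₀ω₉` series: if
`bcdefg = a³q^{2(n+2)}` and `λ = a²q²/(bcd)`, then
`₁₀ω₉[a; b,c,d,e,f,g,q^{−2n}] = [(aq², aq²/ef, λq²/e, λq²/f)_n /
  (aq²/e, aq²/f, λq²/ef, λq²)_n] ₁₀ω₉[λ; λb/a, λc/a, λd/a, e, f, g, q^{−2n}]`. -/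
theorem elliptic_Bailey (p q : ℝ) (hp0 : 0 < p) (hp1 : p < 1) (hq0 : 0 < q) (hq1 : q < 1)
    (n : ℕ) (a b c d e f g : ℂ)
    (ha : a ≠ 0) (hb : b ≠ 0) (hc : c ≠ 0) (hd : d ≠ 0)
    (he : e ≠ 0) (hf : f ≠ 0) (hg : g ≠ 0)
    (hbal : b * c * d * e * f * g = a ^ 3 * qp q (2 * ((n : ℂ) + 2)))
    (lam : ℂ) (hlam : lam = a ^ 2 * qp q 2 / (b * c * d))
    (hden1 : tenW9Den p q n a b c d e f g (qp q (-2 * (n : ℂ))) ≠ 0)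
    (hden2 : tenW9Den p q n lam (lam * b / a) (lam * c / a) (lam * d / a) e f g
      (qp q (-2 * (n : ℂ))) ≠ 0)
    (hden3 : epoch p q (a * qp q 2 / e) n * epoch p q (a * qp q 2 / f) n *
      epoch p q (lam * qp q 2 / (e * f)) n * epoch p q (lam * qp q 2) n ≠ 0) :
    tenW9 p q n a b c d e f g (qp q (-2 * (n : ℂ))) =
      epoch p q (a * qp q 2) n * epoch p q (a * qp q 2 / (e * f)) n *
          epoch p q (lam * qp q 2 / e) n * epoch p q (lam * qp q 2 / f) n /
        (epoch p q (a * qp q 2 / e) n * epoch p q (a * qp q 2 / f) n *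
          epoch p q (lam * qp q 2 / (e * f)) n * epoch p q (lam * qp q 2) n) *
        tenW9 p q n lam (lam * b / a) (lam * c / a) (lam * d / a) e f g
          (qp q (-2 * (n : ℂ))) := by
  obtain ⟨a', rfl⟩ : ∃ x, a = Complex.exp x := ⟨Complex.log a, (Complex.exp_log ha).symm⟩
  obtain ⟨b', rfl⟩ : ∃ x, b = Complex.exp x := ⟨Complex.log b, (Complex.exp_log hb).symm⟩
  obtain ⟨c', rfl⟩ : ∃ x, c = Complex.exp x := ⟨Complex.log c, (Complex.exp_log hc).symm⟩
  obtain ⟨d', rfl⟩ : ∃ x, d = Complex.exp x := ⟨Complex.log d, (Complex.exp_log hd).symm⟩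
  obtain ⟨e', rfl⟩ : ∃ x, e = Complex.exp x := ⟨Complex.log e, (Complex.exp_log he).symm⟩
  obtain ⟨f', rfl⟩ : ∃ x, f = Complex.exp x := ⟨Complex.log f, (Complex.exp_log hf).symm⟩
  have hlam' : lam = Complex.exp (2 * a' + hh q - b' - c' - d') := by
    rw [hlam, q_two, ← Complex.exp_nat_mul, ← Complex.exp_add, ← Complex.exp_add,
      ← Complex.exp_add, ← Complex.exp_sub]
    congr 1
    push_cast
    ring
  have hg' : g = Complex.exp (3 * a' + (n + 2) * hh q - b' - c' - d' - e' - f') := by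
    have h0 : Complex.exp b' * Complex.exp c' * Complex.exp d' * Complex.exp e' * Complex.exp f' ≠ 0 := by
      simp [Complex.exp_ne_zero]
    apply mul_left_cancel₀ h0
    rw [hbal, qp_eq, ← Complex.exp_nat_mul]
    simp only [← Complex.exp_add]
    congr 1
    push_cast
    ring
  clear hlam
  subst hlam' hg'
  exact Bailey_exp p q hp0 hp1 n a' b' c' d' e' f' _ _ (by ring) rfl hden1 hden2 hden3


end
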